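/- A discrete group G is C*-simple if and only if G has no subgroup that is both amenable and recurrent. -/

import Mathlib

noncomputable section
open scoped ENNReal ComplexOrder lp
open MeasureTheory
set_option maxHeartbeats 1000000
set_option synthInstance.maxHeartbeats 1000000

universe u

variable {G : Type u} [Group G]

theorem translat_mem (g : G) (f : ℓ²(G, ℂ)) : Memℓp (fun h => f (g⁻¹ * h)) 2 := by
  have hf : Summable fun i : G => ‖f i‖ ^ (2 : ℝ≥0∞).toReal :=
    (memℓp_gen_iff (by norm_num)).1 (lp.memℓp f)
  exact memℓp_gen ((Equiv.mulLeft g⁻¹).summable_iff.2 hf)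

/-- The left regular representation of `g ∈ G` as a linear isometric bijection of `ℓ²(G)`,
given by `(λ_g ξ)(h) = ξ(g⁻¹ h)`. -/
def lregE (g : G) : ℓ²(G, ℂ) ≃ₗᵢ[ℂ] ℓ²(G, ℂ) :=
{ toFun := fun f => ⟨fun h => f (g⁻¹ * h), translat_mem g f⟩
  invFun := fun f => ⟨fun h => f (g * h), by
    have := translat_mem g⁻¹ f; simp only [inv_inv] at this; exact this⟩
  map_add' := by intro f₁ f₂; ext h; simp [lp.coeFn_add]; rfl
  map_smul' := by intro c f; ext h; simp [lp.coeFn_smul]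
  left_inv := by intro f; ext h; simp
  right_inv := by intro f; ext h; simp
  norm_map' := by
    intro f
    rw [lp.norm_eq_tsum_rpow (by norm_num) f, lp.norm_eq_tsum_rpow (by norm_num)]
    congr 1
    exact (Equiv.mulLeft g⁻¹).tsum_eq (fun h => ‖f h‖ ^ (2 : ℝ≥0∞).toReal) }

/-- The left regular representation `λ` as bounded operators on `ℓ²(G)`. -/
def lreg (g : G) : ℓ²(G, ℂ) →L[ℂ] ℓ²(G, ℂ) :=
  (lregE g).toContinuousLinearEquiv.toContinuousLinearMap

variable (G) in
/-- The reduced group C*-algebra `C*_λ(G)`: the norm-closed star subalgebra of the algebra of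
bounded operators on `ℓ²(G)` generated by the image of the left regular representation. -/
def redCstar : StarSubalgebra ℂ (ℓ²(G, ℂ) →L[ℂ] ℓ²(G, ℂ)) :=
  (StarAlgebra.adjoin ℂ (Set.range (lreg (G := G)))).topologicalClosure

variable (G) in
/-- `G` is C*-simple: `C*_λ(G)` has no closed two-sided ideals other than `{0}` and the
whole algebra. -/
def IsCstarSimple : Prop :=
  ∀ I : TwoSidedIdeal (redCstar G), IsClosed (I : Set (redCstar G)) → I = ⊥ ∨ I = ⊤

attribute [irreducible] redCstar lreg lregE

variable (G) in
/-- The Chabauty topology on the space of subgroups of `G`: the topology induced from the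
product topology on `{0,1}^G` by identifying a subgroup with its indicator function. -/
def chabauty : TopologicalSpace (Subgroup G) :=
  letI : ∀ p : Prop, Decidable p := Classical.propDecidable
  TopologicalSpace.induced (fun (H : Subgroup G) (g : G) => decide (g ∈ H))
    (inferInstance : TopologicalSpace (G → Bool))

attribute [instance] chabauty

/-- The conjugate subgroup `gHg⁻¹`. -/
def conjSub (g : G) (H : Subgroup G) : Subgroup G :=
  H.map (MulAut.conj g).toMonoidHom

/-- `H` is a recurrent subgroup of `G`: the trivial subgroup does not belong to the Chabauty
closure of the set of conjugates of `H`. -/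
def IsRecurrent (H : Subgroup G) : Prop :=
  (⊥ : Subgroup G) ∉ closure {K : Subgroup G | ∃ g : G, K = conjSub g H}

/-- Left translation of a bounded function on a group `H`. -/
def translInfty {H : Type*} [Group H] (h : H) (f : lp (fun _ : H => ℝ) ∞) :
    lp (fun _ : H => ℝ) ∞ :=
  ⟨fun k => f (h⁻¹ * k), by
    apply memℓp_infty
    have : (Set.range fun k => ‖f (h⁻¹ * k)‖) = Set.range fun k => ‖f k‖ :=
      (Equiv.mulLeft h⁻¹).surjective.range_comp (fun k => ‖f k‖)
    rw [this]
    exact memℓp_infty_iff.1 (lp.memℓp f)⟩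

/-- A group `H` is amenable: there exists a left-invariant mean on `ℓ∞(H)`, i.e. a unital
positive linear functional invariant under left translation. -/
def IsAmenable (H : Type*) [Group H] : Prop :=
  ∃ m : lp (fun _ : H => ℝ) ∞ →ₗ[ℝ] ℝ,
    m 1 = 1 ∧ (∀ f : lp (fun _ : H => ℝ) ∞, (∀ k, 0 ≤ f k) → 0 ≤ m f) ∧
      ∀ (h : H) (f : lp (fun _ : H => ℝ) ∞), m (translInfty h f) = m f

/-!
Means on `G` form a semigroup under convolution. A minimal weak-* closed left ideal `N` of this
semigroup plays the role of the Furstenberg boundary, and its extreme points `y`, which exist by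
Krein–Milman, have amenable stabilizers. Given a unitary representation of `G` on an algebra that
also contains the bounded functions on a `G`-space, minimality lets one average a state, without
losing its vanishing on a conjugation invariant subspace, until the barycentre of its restriction
to the functions is `y`. As `y` is extreme, the state has zero variance on Poisson transforms, so
it is multiplicative on them; in particular it kills the unitary of every `g` with `g • y ≠ y`.

Suppose no amenable subgroup is recurrent, and take such a state killing a proper ideal of
`C*_λ(G)`. It vanishes off the stabilizer of `y`, which can be conjugated off any given finite set
of nontrivial elements; hence the canonical trace also vanishes on the ideal, which is therefore
zero.

Conversely, suppose that `G` is C*-simple and that some amenable `H` is recurrent, as witnessed by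
a finite set `F` of nontrivial elements. A fixed point of `H` in `N` shows that every extreme point
is fixed by an element of `F`. By C*-simplicity, `C*_λ(G)` is a quotient of the C*-algebra of the
permutation representation on the orbit of an extreme point, so there is a state as above killing
all `g ≠ 1`. Thinning `F` to an irredundant cover of the orbit by fixed point sets yields a
function supported on the fixed points of a single element `i ∈ F` on which the state is nonzero,
although `i` acts trivially on it.
-/

section Means

variable {Ω Ω' : Type*}

/-- A bounded family of real functionals on `V`, given as a linear map into the functions on `ι`,
regarded as a bounded operator into `ℓ^∞(ι)`. -/
def linftyOfBounded {ι V : Type*} [NormedAddCommGroup V] [NormedSpace ℝ V] (φ : V →ₗ[ℝ] ι → ℝ)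
    {C : ℝ} (hC : 0 ≤ C) (h : ∀ x i, |φ x i| ≤ C * ‖x‖) : V →L[ℝ] ℓ^∞(ι, ℝ) :=
  LinearMap.mkContinuous
    { toFun x := ⟨φ x, memℓp_infty ⟨C * ‖x‖, Set.forall_mem_range.2 (h x)⟩⟩
      map_add' _ _ := Subtype.ext (map_add φ _ _)
      map_smul' _ _ := Subtype.ext (map_smul φ _ _) }
    C fun x => lp.norm_le_of_forall_le (by positivity) (h x)

theorem abs_linfty_apply_le_norm (f : ℓ^∞(Ω, ℝ)) (ω : Ω) : |f ω| ≤ ‖f‖ :=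
  lp.norm_apply_le_norm ENNReal.top_ne_zero f ω

/-- Composition `f ↦ f ∘ s` on bounded functions. -/
def pullback (s : Ω' → Ω) : ℓ^∞(Ω, ℝ) →L[ℝ] ℓ^∞(Ω', ℝ) :=
  linftyOfBounded
    { toFun f := fun ω => f (s ω), map_add' _ _ := rfl, map_smul' _ _ := rfl } zero_le_one
    fun f ω => (one_mul ‖f‖).symm ▸ abs_linfty_apply_le_norm f (s ω)

/-- A mean on `Ω`: a unital positive functional on the bounded functions. -/
structure IsMean (m : ℓ^∞(Ω, ℝ) →L[ℝ] ℝ) : Prop where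
  map_one : m 1 = 1
  nonneg : ∀ f : ℓ^∞(Ω, ℝ), (∀ ω, 0 ≤ f ω) → 0 ≤ m f

theorem isMean_eval (ω : Ω) : IsMean (lp.evalCLM ℝ (fun _ : Ω => ℝ) ∞ ω) :=
  ⟨rfl, fun _ hf => hf ω⟩

theorem abs_le_norm_of_positive_unital {m : ℓ^∞(Ω, ℝ) →ₗ[ℝ] ℝ} (h1 : m 1 = 1)
    (hm : ∀ f : ℓ^∞(Ω, ℝ), (∀ ω, 0 ≤ f ω) → 0 ≤ m f) (f : ℓ^∞(Ω, ℝ)) : |m f| ≤ ‖f‖ := by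
  have h (ω) := abs_le.1 (abs_linfty_apply_le_norm f ω)
  have hadd := hm (‖f‖ • 1 + f) fun ω => by
    simp only [lp.coeFn_add, lp.coeFn_smul, Pi.add_apply, Pi.smul_apply, lp.infty_coeFn_one,
      Pi.one_apply, smul_eq_mul, mul_one]
    linarith [(h ω).1]
  have hsub := hm (‖f‖ • 1 - f) fun ω => by
    simp only [lp.coeFn_sub, lp.coeFn_smul, Pi.sub_apply, Pi.smul_apply, lp.infty_coeFn_one,
      Pi.one_apply, smul_eq_mul, mul_one]
    linarith [(h ω).2]
  simp only [map_add, map_sub, map_smul, h1, smul_eq_mul, mul_one] at hadd hsub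
  exact abs_le.2 ⟨by linarith, by linarith⟩

/-- Positive unital functionals are automatically continuous, hence means. -/
def meanOfPositive (m : ℓ^∞(Ω, ℝ) →ₗ[ℝ] ℝ) (h1 : m 1 = 1)
    (hm : ∀ f : ℓ^∞(Ω, ℝ), (∀ ω, 0 ≤ f ω) → 0 ≤ m f) : ℓ^∞(Ω, ℝ) →L[ℝ] ℝ :=
  m.mkContinuous 1 fun f => by simpa using abs_le_norm_of_positive_unital h1 hm f

theorem isMean_meanOfPositive (m : ℓ^∞(Ω, ℝ) →ₗ[ℝ] ℝ) (h1 : m 1 = 1)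
    (hm : ∀ f : ℓ^∞(Ω, ℝ), (∀ ω, 0 ≤ f ω) → 0 ≤ m f) : IsMean (meanOfPositive m h1 hm) :=
  ⟨h1, hm⟩

namespace IsMean

variable {m : ℓ^∞(Ω, ℝ) →L[ℝ] ℝ}

theorem abs_apply_le (hm : IsMean m) (f : ℓ^∞(Ω, ℝ)) : |m f| ≤ ‖f‖ :=
  abs_le_norm_of_positive_unital (m := m.toLinearMap) hm.map_one hm.nonneg f

theorem map_smul_one (hm : IsMean m) (c : ℝ) : m (c • 1) = c := by
  rw [map_smul, hm.map_one, smul_eq_mul, mul_one]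

theorem mono (hm : IsMean m) {f g : ℓ^∞(Ω, ℝ)} (h : ∀ ω, f ω ≤ g ω) : m f ≤ m g := by
  rw [← sub_nonneg, ← map_sub]
  exact hm.nonneg _ fun ω => sub_nonneg.2 (h ω)

theorem le_of_forall_le (hm : IsMean m) {f : ℓ^∞(Ω, ℝ)} {c : ℝ} (h : ∀ ω, f ω ≤ c) : m f ≤ c :=
  hm.map_smul_one c ▸ hm.mono fun ω => (h ω).trans_eq (mul_one c).symm

theorem le_of_forall_ge (hm : IsMean m) {f : ℓ^∞(Ω, ℝ)} {c : ℝ} (h : ∀ ω, c ≤ f ω) : c ≤ m f :=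
  hm.map_smul_one c ▸ hm.mono fun ω => (mul_one c).trans_le (h ω)

theorem comp_pullback (hm : IsMean m) (s : Ω → Ω') : IsMean (m ∘L pullback s) :=
  ⟨hm.map_one, fun _ hf => hm.nonneg _ fun ω => hf (s ω)⟩

end IsMean

theorem isCompact_setOf_isMean (Ω : Type*) :
    IsCompact (WeakDual.toStrongDual ⁻¹' {m : ℓ^∞(Ω, ℝ) →L[ℝ] ℝ | IsMean m}) := by
  refine (WeakDual.isCompact_closedBall 0 1).of_isClosed_subset ?_ fun m hm => ?_
  · have heq : WeakDual.toStrongDual ⁻¹' {m : ℓ^∞(Ω, ℝ) →L[ℝ] ℝ | IsMean m} =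
        {m : WeakDual ℝ ℓ^∞(Ω, ℝ) | m 1 = 1} ∩
          ⋂ (f : ℓ^∞(Ω, ℝ)) (_ : ∀ ω, 0 ≤ f ω), {m : WeakDual ℝ ℓ^∞(Ω, ℝ) | 0 ≤ m f} := by
      ext m
      simp only [Set.mem_inter_iff, Set.mem_iInter]
      exact ⟨fun h => ⟨h.map_one, h.nonneg⟩, fun h => ⟨h.1, h.2⟩⟩
    rw [heq]
    exact (isClosed_eq (WeakDual.eval_continuous 1) continuous_const).inter <|
      isClosed_iInter fun f => isClosed_iInter fun _ =>
        isClosed_le continuous_const (WeakDual.eval_continuous f)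
  · rw [Set.mem_preimage, mem_closedBall_zero_iff]
    exact ContinuousLinearMap.opNorm_le_bound _ zero_le_one fun f => by
      simpa using IsMean.abs_apply_le hm f

end Means

section Convolution

variable {Ω : Type*}

/-- Left translation of functionals on `ℓ^∞(G)`: `(g • y) f = y (f (g ·))`. -/
instance translationAction : MulAction G (ℓ^∞(G, ℝ) →L[ℝ] ℝ) where
  smul g y := y ∘L pullback (g * ·)
  one_smul y := by
    ext f
    exact congrArg y (Subtype.ext (funext fun h => congrArg f (one_mul h)))
  mul_smul g k y := by
    ext f
    exact congrArg y (Subtype.ext (funext fun h => congrArg f (mul_assoc g k h)))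

theorem IsMean.translate {y : ℓ^∞(G, ℝ) →L[ℝ] ℝ} (hy : IsMean y) (g : G) : IsMean (g • y) :=
  hy.comp_pullback _

/-- The Poisson transform `f ↦ (ω ↦ (s ω • y) f)` of bounded functions on `G` along `s : Ω → G`. -/
def poisson (y : ℓ^∞(G, ℝ) →L[ℝ] ℝ) (s : Ω → G) : ℓ^∞(G, ℝ) →L[ℝ] ℓ^∞(Ω, ℝ) :=
  linftyOfBounded
    { toFun f := fun ω => (s ω • y) f
      map_add' _ _ := funext fun _ => map_add _ _ _
      map_smul' _ _ := funext fun _ => map_smul _ _ _ } (norm_nonneg y)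
    fun f _ => y.le_opNorm_of_le <| lp.norm_le_of_forall_le (norm_nonneg f) fun _ =>
      abs_linfty_apply_le_norm f _

/-- The convolution `f ↦ ∫ y (f (g ·)) dm(g)` of functionals on `ℓ^∞(G)`. -/
def conv (m y : ℓ^∞(G, ℝ) →L[ℝ] ℝ) : ℓ^∞(G, ℝ) →L[ℝ] ℝ := m ∘L poisson y id

theorem conv_assoc (m n y : ℓ^∞(G, ℝ) →L[ℝ] ℝ) : conv (conv m n) y = conv m (conv n y) := by
  ext f
  refine congrArg m (Subtype.ext (funext fun g => congrArg n (Subtype.ext (funext fun h => ?_))))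
  exact congrArg (· f) (mul_smul g h y)

theorem conv_eval (g : G) (y : ℓ^∞(G, ℝ) →L[ℝ] ℝ) :
    conv (lp.evalCLM ℝ (fun _ : G => ℝ) ∞ g) y = g • y :=
  ContinuousLinearMap.ext fun _ => rfl

theorem IsMean.conv {m y : ℓ^∞(G, ℝ) →L[ℝ] ℝ} (hm : IsMean m) (hy : IsMean y) :
    IsMean (conv m y) where
  map_one := by
    rw [← hm.map_one]
    exact congrArg m (Subtype.ext (funext fun _ => hy.map_one))
  nonneg f hf := hm.nonneg _ fun g => (hy.translate g).nonneg f hf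

end Convolution

section MinimalIdeals

/-- A nonempty weak-* closed left ideal of the convolution semigroup of means on `G`. -/
structure IsClosedLeftIdeal (N : Set (ℓ^∞(G, ℝ) →L[ℝ] ℝ)) : Prop where
  nonempty : N.Nonempty
  isClosed : IsClosed (WeakDual.toStrongDual ⁻¹' N)
  isMean : ∀ y ∈ N, IsMean y
  conv_mem : ∀ m y, IsMean m → y ∈ N → conv m y ∈ N

namespace IsClosedLeftIdeal

variable {N : Set (ℓ^∞(G, ℝ) →L[ℝ] ℝ)}

theorem isCompact (hN : IsClosedLeftIdeal N) : IsCompact (WeakDual.toStrongDual ⁻¹' N) :=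
  (isCompact_setOf_isMean G).of_isClosed_subset hN.isClosed hN.isMean

theorem smul_mem (hN : IsClosedLeftIdeal N) (g : G) {y : ℓ^∞(G, ℝ) →L[ℝ] ℝ} (hy : y ∈ N) :
    g • y ∈ N :=
  conv_eval g y ▸ hN.conv_mem _ y (isMean_eval g) hy

theorem smul_mem_extremePoints (hN : IsClosedLeftIdeal N) (g : G) {y : ℓ^∞(G, ℝ) →L[ℝ] ℝ}
    (hy : y ∈ N.extremePoints ℝ) : g • y ∈ N.extremePoints ℝ := by
  rw [mem_extremePoints_iff_left] at hy ⊢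
  refine ⟨hN.smul_mem g hy.1, fun x₁ h₁ x₂ h₂ ⟨a, b, ha, hb, hab, hx⟩ => ?_⟩
  rw [← inv_smul_eq_iff]
  refine hy.2 _ (hN.smul_mem g⁻¹ h₁) _ (hN.smul_mem g⁻¹ h₂) ⟨a, b, ha, hb, hab, ?_⟩
  calc a • g⁻¹ • x₁ + b • g⁻¹ • x₂ = g⁻¹ • (a • x₁ + b • x₂) :=
        ContinuousLinearMap.ext fun _ => rfl
    _ = y := by rw [hx, inv_smul_smul]

theorem setOf_isMean (G : Type*) [Group G] :
    IsClosedLeftIdeal {y : ℓ^∞(G, ℝ) →L[ℝ] ℝ | IsMean y} where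
  nonempty := ⟨_, isMean_eval 1⟩
  isClosed := (isCompact_setOf_isMean G).isClosed
  isMean _ hy := hy
  conv_mem _ _ hm hy := hm.conv hy

theorem sInter {c : Set (Set (ℓ^∞(G, ℝ) →L[ℝ] ℝ))} (hc : ∀ N ∈ c, IsClosedLeftIdeal N)
    (hchain : IsChain (· ⊆ ·) c) (hne : c.Nonempty) : IsClosedLeftIdeal (⋂₀ c) where
  nonempty := by
    have : Nonempty c := hne.to_subtype
    have := IsCompact.nonempty_iInter_of_directed_nonempty_isCompact_isClosed
      (fun N : c => WeakDual.toStrongDual ⁻¹' (N : Set (ℓ^∞(G, ℝ) →L[ℝ] ℝ)))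
      (fun N N' => (hchain.total N.2 N'.2).elim
        (fun h => ⟨N, subset_rfl, Set.preimage_mono h⟩)
        fun h => ⟨N', Set.preimage_mono h, subset_rfl⟩)
      (fun N => (hc N N.2).nonempty) (fun N => (hc N N.2).isCompact) fun N => (hc N N.2).isClosed
    rw [← Set.preimage_iInter, ← Set.sInter_eq_iInter] at this
    exact this
  isClosed := by
    rw [Set.preimage_sInter]
    exact isClosed_biInter fun N hN => (hc N hN).isClosed
  isMean y hy := hne.elim fun N hN => (hc N hN).isMean y (hy N hN)
  conv_mem m y hm hy N hN := (hc N hN).conv_mem m y hm (hy N hN)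

theorem range_conv {y : ℓ^∞(G, ℝ) →L[ℝ] ℝ} (hy : IsMean y) :
    IsClosedLeftIdeal ((conv · y) '' {m | IsMean m}) where
  nonempty := ⟨_, _, isMean_eval 1, rfl⟩
  isClosed := by
    have hcont : Continuous fun m : WeakDual ℝ ℓ^∞(G, ℝ) =>
        StrongDual.toWeakDual (conv (WeakDual.toStrongDual m) y) :=
      WeakDual.continuous_of_continuous_eval fun f => WeakDual.eval_continuous (poisson y id f)
    exact ((isCompact_setOf_isMean G).image hcont).isClosed
  isMean := by
    rintro _ ⟨m, hm, rfl⟩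
    exact IsMean.conv hm hy
  conv_mem := by
    rintro n _ hn ⟨m, hm, rfl⟩
    exact ⟨conv n m, hn.conv hm, conv_assoc n m y⟩

end IsClosedLeftIdeal

/-- A minimal weak-* closed left ideal of means; it plays the role of the Furstenberg boundary
of `G`. -/
def IsMinimalLeftIdeal (N : Set (ℓ^∞(G, ℝ) →L[ℝ] ℝ)) : Prop := Minimal IsClosedLeftIdeal N

namespace IsMinimalLeftIdeal

variable {N : Set (ℓ^∞(G, ℝ) →L[ℝ] ℝ)}

theorem exists_eq_conv (hN : IsMinimalLeftIdeal N) {y z : ℓ^∞(G, ℝ) →L[ℝ] ℝ} (hy : y ∈ N)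
    (hz : z ∈ N) : ∃ m, IsMean m ∧ z = conv m y := by
  obtain ⟨m, hm, h⟩ := hN.2 (IsClosedLeftIdeal.range_conv (hN.prop.isMean y hy))
    (Set.image_subset_iff.2 fun m hm => hN.prop.conv_mem m y hm hy) hz
  exact ⟨m, hm, h.symm⟩

theorem extremePoints_nonempty (hN : IsMinimalLeftIdeal N) : (N.extremePoints ℝ).Nonempty := by
  have : LocallyConvexSpace ℝ (WeakDual ℝ ℓ^∞(G, ℝ)) := WeakBilin.locallyConvexSpace
  exact hN.prop.isCompact.extremePoints_nonempty hN.prop.nonempty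

end IsMinimalLeftIdeal

theorem exists_isMinimalLeftIdeal (G : Type*) [Group G] :
    ∃ N : Set (ℓ^∞(G, ℝ) →L[ℝ] ℝ), IsMinimalLeftIdeal N := by
  obtain ⟨N, -, hN⟩ := zorn_superset_nonempty {N | IsClosedLeftIdeal N}
    (fun c hc hchain hne => ⟨⋂₀ c, IsClosedLeftIdeal.sInter hc hchain hne,
      fun _ => Set.sInter_subset_of_mem⟩) _ (IsClosedLeftIdeal.setOf_isMean G)
  exact ⟨N, hN⟩

end MinimalIdeals

section Bauer

variable {Ω V : Type*} [NormedAddCommGroup V] [NormedSpace ℝ V]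

/-- The functional `l ↦ μ (k l) / μ k`: the mean `μ` conditioned on the weight `k`. -/
def condMean (μ : ℓ^∞(Ω, ℝ) →L[ℝ] ℝ) (k : ℓ^∞(Ω, ℝ)) : ℓ^∞(Ω, ℝ) →L[ℝ] ℝ :=
  (μ k)⁻¹ • μ ∘L ContinuousLinearMap.mul ℝ ℓ^∞(Ω, ℝ) k

theorem mul_condMean {μ : ℓ^∞(Ω, ℝ) →L[ℝ] ℝ} {k : ℓ^∞(Ω, ℝ)} (hk : μ k ≠ 0) (l : ℓ^∞(Ω, ℝ)) :
    μ k * condMean μ k l = μ (k * l) :=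
  mul_inv_cancel_left₀ hk _

theorem IsMean.condMean {μ : ℓ^∞(Ω, ℝ) →L[ℝ] ℝ} (hμ : IsMean μ) {k : ℓ^∞(Ω, ℝ)}
    (hk : ∀ ω, 0 ≤ k ω) (hμk : μ k ≠ 0) : IsMean (condMean μ k) where
  map_one := by
    rw [← mul_right_inj' hμk, mul_condMean hμk, mul_one, mul_one]
  nonneg l hl := mul_nonneg (inv_nonneg.2 (hμ.nonneg k hk)) <|
    hμ.nonneg _ fun ω => mul_nonneg (hk ω) (hl ω)

theorem apply_mul_of_mem_extremePoints_of_mem_Icc {P : V →L[ℝ] ℓ^∞(Ω, ℝ)} {C : Set (V →L[ℝ] ℝ)}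
    (hC : ∀ ν, IsMean ν → ν ∘L P ∈ C) {μ : ℓ^∞(Ω, ℝ) →L[ℝ] ℝ} (hμ : IsMean μ)
    (hext : μ ∘L P ∈ C.extremePoints ℝ) {k : ℓ^∞(Ω, ℝ)} (hk : ∀ ω, k ω ∈ Set.Icc (1 / 4) (3 / 4))
    (v : V) : μ (k * P v) = μ k * μ (P v) := by
  have hk₁ : 1 / 4 ≤ μ k := hμ.le_of_forall_ge fun ω => (hk ω).1
  have hk₂ : μ k ≤ 3 / 4 := hμ.le_of_forall_le fun ω => (hk ω).2
  have hsub : μ (1 - k) = 1 - μ k := by rw [map_sub, hμ.map_one]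
  have hne : μ k ≠ 0 := by linarith
  have hne' : μ (1 - k) ≠ 0 := by linarith
  have hcond := hC _ (hμ.condMean (fun ω => by linarith [(hk ω).1]) hne)
  have hcond' := hC _ (hμ.condMean (k := 1 - k) (fun ω => sub_nonneg.2 <| by
    change k ω ≤ 1
    linarith [(hk ω).2]) hne')
  have heq : condMean μ k ∘L P = μ ∘L P := by
    refine (mem_extremePoints_iff_left.1 hext).2 _ hcond _ hcond'
      ⟨μ k, 1 - μ k, by linarith, by linarith, by ring, ?_⟩
    ext w
    calc μ k * condMean μ k (P w) + (1 - μ k) * condMean μ (1 - k) (P w)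
        = μ (k * P w) + μ ((1 - k) * P w) := by
          rw [← hsub, mul_condMean hne, mul_condMean hne']
      _ = μ (P w) := by rw [← map_add, ← add_mul, add_sub_cancel, one_mul]
  rw [← mul_condMean hne]
  exact congrArg (μ k * ·) (DFunLike.congr_fun heq v)

/-- **Bauer's lemma**. Conditioning `μ` on a weight `k` and on `1 - k` would otherwise split its
barycentre; a general `k` is an affine image of such a weight. -/
theorem apply_mul_of_mem_extremePoints {P : V →L[ℝ] ℓ^∞(Ω, ℝ)} {C : Set (V →L[ℝ] ℝ)}
    (hC : ∀ ν, IsMean ν → ν ∘L P ∈ C) {μ : ℓ^∞(Ω, ℝ) →L[ℝ] ℝ} (hμ : IsMean μ)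
    (hext : μ ∘L P ∈ C.extremePoints ℝ) (k : ℓ^∞(Ω, ℝ)) (v : V) :
    μ (k * P v) = μ k * μ (P v) := by
  set t : ℝ := (4 * (‖k‖ + 1))⁻¹
  have ht : 0 < t := by positivity
  have hmem (ω : Ω) : ((1 / 2 : ℝ) • 1 + t • k) ω ∈ Set.Icc (1 / 4 : ℝ) (3 / 4) := by
    have hle : |t * k ω| ≤ 1 / 4 := by
      calc |t * k ω| = t * |k ω| := by rw [abs_mul, abs_of_pos ht]
        _ ≤ t * (‖k‖ + 1) := by
          gcongr
          exact (abs_linfty_apply_le_norm k ω).trans (by linarith)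
        _ = 1 / 4 := by
          have : ‖k‖ + 1 ≠ 0 := by positivity
          simp only [t]
          field_simp
    change 1 / 2 * 1 + t * k ω ∈ Set.Icc (1 / 4 : ℝ) (3 / 4)
    constructor <;> linarith [(abs_le.1 hle).1, (abs_le.1 hle).2]
  have h := apply_mul_of_mem_extremePoints_of_mem_Icc hC hμ hext hmem v
  simp only [add_mul, smul_mul_assoc, one_mul, map_add, map_smul, smul_eq_mul, hμ.map_one,
    mul_assoc] at h
  exact mul_left_cancel₀ ht.ne' (by linarith)

end Bauer

section States

variable {D : Type*} [CStarAlgebra D]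

/-- The real part of a state on a unital C*-algebra. Real-valued functionals are used so that
states can be averaged by means on real bounded functions. -/
structure IsRealState (ψ : D →L[ℝ] ℝ) : Prop where
  le_norm : ∀ x, ψ x ≤ ‖x‖
  map_one : ψ 1 = 1

namespace IsRealState

variable {ψ : D →L[ℝ] ℝ}

theorem abs_apply_le (hψ : IsRealState ψ) (x : D) : |ψ x| ≤ ‖x‖ :=
  abs_le'.2 ⟨hψ.le_norm x, by simpa using hψ.le_norm (-x)⟩

theorem nontrivial (hψ : IsRealState ψ) : Nontrivial D :=
  ⟨1, 0, fun h => one_ne_zero (α := ℝ) <| by rw [← hψ.map_one, h, map_zero]⟩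

theorem apply_eq_zero_of_star_eq_neg (hψ : IsRealState ψ) {x : D} (hx : star x = -x) :
    ψ x = 0 := by
  have := hψ.nontrivial
  have hnorm (t : ℝ) : ‖1 + t • x‖ ^ 2 ≤ 1 + t ^ 2 * ‖x‖ ^ 2 := by
    have hstar : star (1 + t • x) * (1 + t • x) = 1 - t ^ 2 • (x * x) := by
      rw [star_add, star_one, star_smul, star_trivial, hx, smul_neg, ← sub_eq_add_neg, mul_add,
        sub_mul, sub_mul, smul_mul_smul_comm, sq]
      simp
    calc ‖1 + t • x‖ ^ 2 = ‖1 - t ^ 2 • (x * x)‖ := by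
          rw [sq, ← CStarRing.norm_star_mul_self, hstar]
      _ ≤ ‖(1 : D)‖ + ‖t ^ 2 • (x * x)‖ := norm_sub_le _ _
      _ = 1 + t ^ 2 * ‖x * x‖ := by rw [CStarRing.norm_one, norm_smul_of_nonneg (sq_nonneg t)]
      _ ≤ 1 + t ^ 2 * ‖x‖ ^ 2 := by
          gcongr
          exact (norm_mul_le x x).trans_eq (sq _).symm
  have hquad (t : ℝ) : 0 ≤ (‖x‖ ^ 2 - ψ x ^ 2) * (t * t) + -(2 * ψ x) * t + 0 := by
    have h := (sq_le_sq' (abs_le.1 (hψ.abs_apply_le (1 + t • x))).1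
      (hψ.le_norm (1 + t • x))).trans (hnorm t)
    rw [map_add, map_smul, hψ.map_one, smul_eq_mul] at h
    nlinarith
  have h := discrim_le_zero hquad
  rw [discrim] at h
  nlinarith

theorem map_star (hψ : IsRealState ψ) (x : D) : ψ (star x) = ψ x := by
  have h := hψ.apply_eq_zero_of_star_eq_neg (x := x - star x) (by simp)
  rw [map_sub, sub_eq_zero] at h
  exact h.symm

theorem star_mul_self_nonneg (hψ : IsRealState ψ) (x : D) : 0 ≤ ψ (star x * x) := by
  let _ : PartialOrder D := CStarAlgebra.spectralOrder D
  have _ : StarOrderedRing D := CStarAlgebra.spectralOrderedRing D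
  have := hψ.nontrivial
  have hle : star x * x ≤ algebraMap ℝ D (‖x‖ ^ 2) := CStarAlgebra.star_mul_le_algebraMap_norm_sq
  have hnorm : ‖algebraMap ℝ D (‖x‖ ^ 2) - star x * x‖ ≤ ‖x‖ ^ 2 :=
    (CStarAlgebra.norm_le_norm_of_nonneg_of_le (sub_nonneg.2 hle)
      (sub_le_self _ (_root_.star_mul_self_nonneg x))).trans_eq <| by
        rw [norm_algebraMap', Real.norm_of_nonneg (sq_nonneg _)]
  have h := (hψ.le_norm _).trans hnorm
  rw [map_sub, Algebra.algebraMap_eq_smul_one, map_smul, hψ.map_one, smul_eq_mul] at h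
  linarith

theorem sq_apply_star_mul_le (hψ : IsRealState ψ) (a x : D) :
    ψ (star a * x) ^ 2 ≤ ψ (star a * a) * ψ (star x * x) := by
  have hquad (t : ℝ) :
      0 ≤ ψ (star a * a) * (t * t) + 2 * ψ (star a * x) * t + ψ (star x * x) := by
    have h := hψ.star_mul_self_nonneg (t • a + x)
    have hsymm : ψ (star x * a) = ψ (star a * x) := by rw [← hψ.map_star, star_mul, star_star]
    simp only [star_add, star_smul, star_trivial, add_mul, mul_add, smul_mul_assoc,
      mul_smul_comm, map_add, map_smul, smul_eq_mul, hsymm] at h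
    linarith
  have h := discrim_le_zero hquad
  rw [discrim] at h
  linarith

theorem apply_mul_of_sq_eq (hψ : IsRealState ψ) {a : D} (ha : IsSelfAdjoint a)
    (hsq : ψ (a * a) = ψ a ^ 2) (x : D) : ψ (a * x) = ψ a * ψ x := by
  set b : D := a - ψ a • 1
  have hb : star b = b := by simp [b, ha.star_eq]
  have hvar : ψ (star b * b) = 0 := by
    rw [hb]
    simp only [b, sub_mul, mul_sub, smul_mul_assoc, mul_smul_comm, one_mul, mul_one, map_sub,
      map_smul, smul_eq_mul, hψ.map_one, hsq]
    ring
  have h : ψ (star b * x) = 0 := by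
    have h := hψ.sq_apply_star_mul_le b x
    rw [hvar, zero_mul] at h
    exact pow_eq_zero_iff two_ne_zero |>.1 (le_antisymm h (sq_nonneg _))
  rw [hb] at h
  simp only [b, sub_mul, smul_mul_assoc, one_mul, map_sub, map_smul, smul_eq_mul] at h
  linarith

theorem mul_apply_of_sq_eq (hψ : IsRealState ψ) {a : D} (ha : IsSelfAdjoint a)
    (hsq : ψ (a * a) = ψ a ^ 2) (x : D) : ψ (x * a) = ψ x * ψ a := by
  rw [← hψ.map_star, star_mul, ha.star_eq, hψ.apply_mul_of_sq_eq ha hsq, hψ.map_star, mul_comm]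

end IsRealState

theorem norm_star_mul_mul_unitary (u : unitary D) (x : D) : ‖star (u : D) * x * u‖ = ‖x‖ := by
  rw [CStarRing.norm_mul_coe_unitary, ← Unitary.coe_star, CStarRing.norm_coe_unitary_mul]

/-- The bounded function `i ↦ ψ (u i* x u i)` of conjugates of `x`. -/
def conjFunction {ι : Type*} {ψ : D →L[ℝ] ℝ} (hψ : IsRealState ψ) (u : ι → unitary D) :
    D →L[ℝ] ℓ^∞(ι, ℝ) :=
  linftyOfBounded
    { toFun x := fun i => ψ (star (u i : D) * x * u i)
      map_add' x y := funext fun i => by simp only [mul_add, add_mul, map_add, Pi.add_apply]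
      map_smul' r x := funext fun i => by
        simp only [mul_smul_comm, smul_mul_assoc, map_smul, RingHom.id_apply, Pi.smul_apply] }
    zero_le_one fun x i => by
      rw [one_mul]
      exact (hψ.abs_apply_le _).trans_eq (norm_star_mul_mul_unitary (u i) x)

theorem IsMean.isRealState_conjFunction {ι : Type*} {m : ℓ^∞(ι, ℝ) →L[ℝ] ℝ} (hm : IsMean m)
    {ψ : D →L[ℝ] ℝ} (hψ : IsRealState ψ) (u : ι → unitary D) :
    IsRealState (m ∘L conjFunction hψ u) where
  le_norm x := hm.le_of_forall_le fun i =>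
    (hψ.le_norm _).trans_eq (norm_star_mul_mul_unitary (u i) x)
  map_one := by
    rw [← hm.map_one]
    refine congrArg m (Subtype.ext (funext fun i => ?_))
    change ψ (star (u i : D) * 1 * u i) = 1
    rw [mul_one, Unitary.coe_star_mul_self, hψ.map_one]

theorem exists_isRealState_eq_zero [Nontrivial D] {W : Submodule ℂ D} (hW : ∀ w ∈ W, 1 ≤ ‖1 - w‖) :
    ∃ ψ : D →L[ℝ] ℝ, IsRealState ψ ∧ ∀ w ∈ W, ψ w = 0 := by
  obtain ⟨f, hf, hf1⟩ := exists_dual_vector'' ℂ (W.mkQ 1)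
  have h1 : ‖W.mkQ 1‖ = 1 := by
    refine le_antisymm ((Submodule.Quotient.norm_mk_le W 1).trans CStarRing.norm_one.le) ?_
    refine (QuotientAddGroup.le_norm_iff (S := W.toAddSubgroup)).2 fun m hm => ?_
    simpa using hW _ ((Submodule.Quotient.eq W).1 hm.symm)
  let F : D →L[ℂ] ℂ := f ∘L W.mkQL
  refine ⟨Complex.reCLM ∘L F.restrictScalars ℝ, ⟨fun x => ?_, ?_⟩, fun w hw => ?_⟩
  · calc (f (W.mkQ x)).re ≤ ‖f (W.mkQ x)‖ := Complex.re_le_norm _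
      _ ≤ 1 * ‖W.mkQ x‖ := f.le_of_opNorm_le hf _
      _ ≤ ‖x‖ := by
        rw [one_mul]
        exact Submodule.Quotient.norm_mk_le W x
  · change (f (W.mkQ 1)).re = 1
    rw [hf1, h1]
    simp
  · change (f (W.mkQ w)).re = 0
    rw [Submodule.mkQ_apply, (Submodule.Quotient.mk_eq_zero W).2 hw, map_zero, Complex.zero_re]

end States

section Covariant

variable {Ω D : Type*} [MulAction G Ω] [CStarAlgebra D]

variable (G Ω D) in
/-- A covariant pair on `D`: a unitary representation `u` of `G` and a representation `M` of the
bounded functions on the `G`-space `Ω`, intertwined by conjugation. -/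
structure CovariantRep where
  u : G →* unitary D
  M : ℓ^∞(Ω, ℝ) →⋆ₐ[ℝ] D
  star_mul_mul : ∀ g k, star (u g : D) * M k * u g = M (pullback (g • ·) k)

namespace CovariantRep

variable (ρ : CovariantRep G Ω D) {ψ : D →L[ℝ] ℝ}

theorem M_isSelfAdjoint (k : ℓ^∞(Ω, ℝ)) : IsSelfAdjoint (ρ.M k) :=
  (map_star ρ.M k).symm

theorem M_mul_u (g : G) (k : ℓ^∞(Ω, ℝ)) : ρ.M k * ρ.u g = ρ.u g * ρ.M (pullback (g • ·) k) := by
  rw [← ρ.star_mul_mul, ← mul_assoc, ← mul_assoc, Unitary.mul_star_self_of_mem (ρ.u g).2, one_mul]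

theorem apply_M_nonneg (hψ : IsRealState ψ) {k : ℓ^∞(Ω, ℝ)} (hk : ∀ ω, 0 ≤ k ω) :
    0 ≤ ψ (ρ.M k) := by
  have hbdd : Memℓp (fun ω => √(k ω)) ∞ :=
    memℓp_infty ⟨√‖k‖, Set.forall_mem_range.2 fun ω => by
      rw [Real.norm_of_nonneg (Real.sqrt_nonneg _)]
      exact Real.sqrt_le_sqrt ((le_abs_self _).trans (abs_linfty_apply_le_norm k ω))⟩
  let r : ℓ^∞(Ω, ℝ) := ⟨_, hbdd⟩
  have hr : k = r * r := Subtype.ext (funext fun ω => (Real.mul_self_sqrt (hk ω)).symm)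
  have h := hψ.star_mul_self_nonneg (ρ.M r)
  rwa [(ρ.M_isSelfAdjoint r).star_eq, ← map_mul, ← hr] at h

variable (hψ : IsRealState ψ)

/-- The mean on `Ω` obtained by restricting a state to the bounded functions. -/
def mean : ℓ^∞(Ω, ℝ) →L[ℝ] ℝ :=
  meanOfPositive (ψ.toLinearMap ∘ₗ ρ.M.toAlgHom.toLinearMap)
    ((congrArg ψ (map_one ρ.M)).trans hψ.map_one) fun _ => ρ.apply_M_nonneg hψ

theorem isMean_mean : IsMean (ρ.mean hψ) := isMean_meanOfPositive _ _ _

/-- By Bauer's lemma, elements of the range of `P` have zero variance under the state, so they lie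
in its multiplicative domain. -/
theorem apply_mul_of_mem_extremePoints {V : Type*} [NormedAddCommGroup V] [NormedSpace ℝ V]
    {P : V →L[ℝ] ℓ^∞(Ω, ℝ)} {C : Set (V →L[ℝ] ℝ)} (hC : ∀ ν, IsMean ν → ν ∘L P ∈ C)
    (hext : ρ.mean hψ ∘L P ∈ C.extremePoints ℝ) (v : V) (x : D) :
    ψ (ρ.M (P v) * x) = ψ (ρ.M (P v)) * ψ x ∧ ψ (x * ρ.M (P v)) = ψ x * ψ (ρ.M (P v)) := by
  have hsq : ψ (ρ.M (P v) * ρ.M (P v)) = ψ (ρ.M (P v)) ^ 2 := by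
    rw [← map_mul, sq]
    exact _root_.apply_mul_of_mem_extremePoints hC (ρ.isMean_mean hψ) hext (P v) v
  exact ⟨hψ.apply_mul_of_sq_eq (ρ.M_isSelfAdjoint _) hsq x,
    hψ.mul_apply_of_sq_eq (ρ.M_isSelfAdjoint _) hsq x⟩

end CovariantRep

theorem pullback_poisson {y : ℓ^∞(G, ℝ) →L[ℝ] ℝ} {s : Ω → G}
    (hs : ∀ (g : G) ω, s (g • ω) • y = g • s ω • y) (g : G) (f : ℓ^∞(G, ℝ)) :
    pullback (g • ·) (poisson y s f) = poisson y s (pullback (g * ·) f) :=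
  Subtype.ext (funext fun ω => DFunLike.congr_fun (hs g ω) f)

namespace IsMinimalLeftIdeal

variable {N : Set (ℓ^∞(G, ℝ) →L[ℝ] ℝ)} {y y₀ : ℓ^∞(G, ℝ) →L[ℝ] ℝ} {s : Ω → G}

theorem exists_isRealState_poisson_eq [Nontrivial D] (hN : IsMinimalLeftIdeal N)
    (ρ : CovariantRep G Ω D) (hy : y ∈ N) (hy₀ : y₀ ∈ N)
    (hs : ∀ (g : G) ω, s (g • ω) • y₀ = g • s ω • y₀) {W : Submodule ℂ D}
    (hW : ∀ w ∈ W, 1 ≤ ‖1 - w‖) (hWconj : ∀ g, ∀ w ∈ W, star (ρ.u g : D) * w * ρ.u g ∈ W) :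
    ∃ (ψ : D →L[ℝ] ℝ) (hψ : IsRealState ψ),
      (∀ w ∈ W, ψ w = 0) ∧ ρ.mean hψ ∘L poisson y₀ s = y := by
  obtain ⟨φ, hφ, hφW⟩ := exists_isRealState_eq_zero hW
  obtain ⟨m, hm, rfl⟩ := hN.exists_eq_conv
    (hN.prop.conv_mem (ρ.mean hφ ∘L pullback s) y₀ ((ρ.isMean_mean hφ).comp_pullback s) hy₀) hy
  refine ⟨m ∘L conjFunction hφ ρ.u, hm.isRealState_conjFunction hφ ρ.u, fun w hw => ?_, ?_⟩
  · rw [← map_zero m]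
    exact congrArg m (Subtype.ext (funext fun g => hφW _ (hWconj g w hw)))
  · ext f
    refine congrArg m (Subtype.ext (funext fun g => ?_))
    calc φ (star (ρ.u g : D) * ρ.M (poisson y₀ s f) * ρ.u g)
        = φ (ρ.M (poisson y₀ s (pullback (g * ·) f))) := by
          rw [ρ.star_mul_mul, pullback_poisson hs]
      _ = (g • conv (ρ.mean hφ ∘L pullback s) y₀) f := rfl

/-- A Hahn–Banach state killing `W`, averaged over `G` so that its restriction to the functions on
`Ω` has barycentre the extreme point `y`. Multiplicativity on Poisson transforms then forces
`y f * ψ (u g) = (g • y) f * ψ (u g)`, which gives the last property. -/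
theorem exists_isRealState_multiplicative [Nontrivial D] (hN : IsMinimalLeftIdeal N)
    (ρ : CovariantRep G Ω D) (hy : y ∈ N.extremePoints ℝ) (hy₀ : y₀ ∈ N)
    (hs : ∀ (g : G) ω, s (g • ω) • y₀ = g • s ω • y₀) {W : Submodule ℂ D}
    (hW : ∀ w ∈ W, 1 ≤ ‖1 - w‖) (hWconj : ∀ g, ∀ w ∈ W, star (ρ.u g : D) * w * ρ.u g ∈ W) :
    ∃ ψ : D →L[ℝ] ℝ, IsRealState ψ ∧ (∀ w ∈ W, ψ w = 0) ∧
      (∀ f x, ψ (x * ρ.M (poisson y₀ s f)) = ψ x * y f) ∧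
      ∀ g, g • y ≠ y → ∀ c : ℂ, ψ (c • (ρ.u g : D)) = 0 := by
  obtain ⟨ψ, hψ, hψW, rfl⟩ := hN.exists_isRealState_poisson_eq ρ hy.1 hy₀ hs hW hWconj
  have hbary (ν) (hν : IsMean ν) : ν ∘L poisson y₀ s ∈ N :=
    hN.prop.conv_mem (ν ∘L pullback s) y₀ (hν.comp_pullback s) hy₀
  have hmul := ρ.apply_mul_of_mem_extremePoints hψ hbary hy
  refine ⟨ψ, hψ, hψW, fun f x => (hmul f x).2, fun g hg c => ?_⟩
  by_contra hne
  refine hg (ContinuousLinearMap.ext fun f => mul_left_cancel₀ hne ?_)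
  calc ψ (c • (ρ.u g : D)) * ψ (ρ.M (poisson y₀ s (pullback (g * ·) f)))
      = ψ (c • (ρ.u g : D) * ρ.M (poisson y₀ s (pullback (g * ·) f))) := (hmul _ _).2.symm
    _ = ψ (ρ.M (poisson y₀ s f) * c • (ρ.u g : D)) := by
      rw [← pullback_poisson hs, smul_mul_assoc, ← ρ.M_mul_u, mul_smul_comm]
    _ = ψ (c • (ρ.u g : D)) * ψ (ρ.M (poisson y₀ s f)) := by rw [(hmul _ _).1, mul_comm]

end IsMinimalLeftIdeal

end Covariant

/-- The bounded operators on `ℓ²(Ω)`. -/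
local notation "𝓑(" Ω ")" => ℓ²(Ω, ℂ) →L[ℂ] ℓ²(Ω, ℂ)

section Concrete

variable {Ω : Type*}

section Reindex

variable {Ω' 𝕜 : Type*} [NormedField 𝕜] {p : ℝ≥0∞}

theorem memℓp_comp_equiv (hp : 0 < p.toReal) (σ : Ω' ≃ Ω) (f : ℓ^p(Ω, 𝕜)) :
    Memℓp (fun ω => f (σ ω)) p :=
  memℓp_gen (σ.summable_iff.2 ((memℓp_gen_iff hp).1 (lp.memℓp f)))

variable (hp : 0 < p.toReal) (σ : Ω' ≃ Ω)

/-- The isometry `f ↦ f ∘ σ` of `ℓ^p` spaces induced by a bijection `σ`. -/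
def reindexIsometry [Fact (1 ≤ p)] : ℓ^p(Ω, 𝕜) ≃ₗᵢ[𝕜] ℓ^p(Ω', 𝕜) where
  toFun f := ⟨fun ω => f (σ ω), memℓp_comp_equiv hp σ f⟩
  invFun f := ⟨fun ω => f (σ.symm ω), memℓp_comp_equiv hp σ.symm f⟩
  map_add' _ _ := rfl
  map_smul' _ _ := rfl
  left_inv f := by ext ω; exact congrArg f (σ.apply_symm_apply ω)
  right_inv f := by ext ω; exact congrArg f (σ.symm_apply_apply ω)
  norm_map' f := by
    rw [lp.norm_eq_tsum_rpow hp f, lp.norm_eq_tsum_rpow hp]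
    exact congrArg (· ^ _) (σ.tsum_eq fun ω => ‖f ω‖ ^ p.toReal)

theorem reindexIsometry_apply [Fact (1 ≤ p)] (f : ℓ^p(Ω, 𝕜)) (ω : Ω') :
    reindexIsometry hp σ f ω = f (σ ω) := rfl

theorem reindexIsometry_single [Fact (1 ≤ p)] [DecidableEq Ω] [DecidableEq Ω'] (ω : Ω) (a : 𝕜) :
    reindexIsometry hp σ (lp.single p ω a) = lp.single p (σ.symm ω) a := by
  ext ω'
  rw [reindexIsometry_apply, lp.single_apply, lp.single_apply, Pi.single_apply, Pi.single_apply]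
  simp only [σ.eq_symm_apply]

end Reindex

variable (G Ω) in
/-- The unitary representation `(u g ξ) ω = ξ (g⁻¹ • ω)` of `G` on `ℓ²` of a `G`-set. -/
def permRep [MulAction G Ω] : G →* unitary 𝓑(Ω) where
  toFun g := Unitary.linearIsometryEquiv.symm <|
    reindexIsometry (by norm_num) (MulAction.toPerm g).symm
  map_one' := by
    ext ξ ω
    change ξ ((1 : G)⁻¹ • ω) = ξ ω
    rw [inv_one, one_smul]
  map_mul' g h := by
    ext ξ ω
    change ξ ((g * h)⁻¹ • ω) = ξ (h⁻¹ • g⁻¹ • ω)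
    rw [mul_inv_rev, mul_smul]

theorem permRep_apply [MulAction G Ω] (g : G) (ξ : ℓ²(Ω, ℂ)) (ω : Ω) :
    (permRep G Ω g : 𝓑(Ω)) ξ ω = ξ (g⁻¹ • ω) := rfl

theorem lreg_eq_permRep (g : G) : lreg g = permRep G G g := by
  unfold lreg lregE
  rfl

theorem norm_mul_apply_le (k : ℓ^∞(Ω, ℝ)) (ξ : ℓ²(Ω, ℂ)) (ω : Ω) :
    ‖(k ω : ℂ) * ξ ω‖ ≤ ‖((‖k‖ : ℂ) • ξ) ω‖ := by
  rw [lp.coeFn_smul, Pi.smul_apply, norm_mul, norm_smul, Complex.norm_real, Complex.norm_real,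
    norm_norm]
  gcongr
  exact lp.norm_apply_le_norm ENNReal.top_ne_zero k ω

/-- Multiplication by a bounded function, as an operator on `ℓ²`. -/
def mulOp (k : ℓ^∞(Ω, ℝ)) : 𝓑(Ω) :=
  LinearMap.mkContinuous
    { toFun ξ :=
        ⟨fun ω => (k ω : ℂ) * ξ ω, (lp.memℓp ((‖k‖ : ℂ) • ξ)).mono' (norm_mul_apply_le k ξ)⟩
      map_add' _ _ := Subtype.ext (funext fun _ => mul_add _ _ _)
      map_smul' _ _ := Subtype.ext (funext fun _ => mul_left_comm _ _ _) }
    ‖k‖ fun ξ => (lp.norm_mono two_ne_zero (norm_mul_apply_le k ξ)).trans_eq <| by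
      rw [norm_smul, Complex.norm_real, norm_norm]

theorem mulOp_apply (k : ℓ^∞(Ω, ℝ)) (ξ : ℓ²(Ω, ℂ)) (ω : Ω) : mulOp k ξ ω = k ω * ξ ω := rfl

theorem star_mulOp (k : ℓ^∞(Ω, ℝ)) : star (mulOp k) = mulOp k := by
  rw [eq_comm, ContinuousLinearMap.star_eq_adjoint, ContinuousLinearMap.eq_adjoint_iff]
  intro ξ η
  rw [lp.inner_eq_tsum, lp.inner_eq_tsum]
  refine tsum_congr fun ω => ?_
  rw [mulOp_apply, mulOp_apply, RCLike.inner_apply, RCLike.inner_apply, map_mul,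
    Complex.conj_ofReal, mul_assoc, mul_left_comm]

theorem mulOp_mul_permRep [MulAction G Ω] (g : G) (k : ℓ^∞(Ω, ℝ)) :
    mulOp k * (permRep G Ω g : 𝓑(Ω)) = (permRep G Ω g : 𝓑(Ω)) * mulOp (pullback (g • ·) k) := by
  ext ξ ω
  exact congrArg (fun ω' => (k ω' : ℂ) * ξ (g⁻¹ • ω)) (smul_inv_smul g ω).symm

theorem permRep_mul_mulOp [MulAction G Ω] {g : G} {k : ℓ^∞(Ω, ℝ)} (hk : ∀ ω, g • ω ≠ ω → k ω = 0) :
    (permRep G Ω g : 𝓑(Ω)) * mulOp k = mulOp k := by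
  ext ξ ω
  change (k (g⁻¹ • ω) : ℂ) * ξ (g⁻¹ • ω) = k ω * ξ ω
  by_cases hω : g • ω = ω
  · rw [inv_smul_eq_iff.2 hω.symm]
  · have hω' : g • g⁻¹ • ω ≠ g⁻¹ • ω := by
      rwa [smul_inv_smul, ne_comm, Ne, inv_smul_eq_iff, eq_comm]
    rw [hk ω hω, hk _ hω', Complex.ofReal_zero, zero_mul, zero_mul]

variable (G Ω) in
/-- The permutation representation together with the multiplication operators on `ℓ²`. -/
def permCovariantRep [MulAction G Ω] : CovariantRep G Ω 𝓑(Ω) where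
  u := permRep G Ω
  M :=
    { toFun := mulOp
      map_one' := by
        ext ξ ω
        exact (congrArg (· * ξ ω) Complex.ofReal_one).trans (one_mul _)
      map_mul' k l := by
        ext ξ ω
        exact (congrArg (· * ξ ω) (Complex.ofReal_mul _ _)).trans (mul_assoc _ _ _)
      map_zero' := by
        ext ξ ω
        exact (congrArg (· * ξ ω) Complex.ofReal_zero).trans (zero_mul _)
      map_add' k l := by
        ext ξ ω
        exact (congrArg (· * ξ ω) (Complex.ofReal_add _ _)).trans (add_mul _ _ _)
      commutes' r := by
        ext ξ ω
        rfl
      map_star' k := (star_mulOp k).symm }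
  star_mul_mul g k := by
    rw [mul_assoc]
    change star (permRep G Ω g : 𝓑(Ω)) * (mulOp k * (permRep G Ω g : 𝓑(Ω))) = _
    rw [mulOp_mul_permRep, ← mul_assoc, Unitary.coe_star_mul_self, one_mul]
    rfl

end Concrete

section Subgroups

theorem IsMean.isAmenable_stabilizer {y : ℓ^∞(G, ℝ) →L[ℝ] ℝ} (hy : IsMean y) :
    IsAmenable (MulAction.stabilizer G y) := by
  obtain ⟨T, hT, -⟩ := (MulAction.stabilizer G y).exists_isComplement_right 1
  let κ : G → MulAction.stabilizer G y := fun g => (hT.equiv g).1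
  have hκ (h : MulAction.stabilizer G y) (g : G) : κ (h * g) = h * κ g :=
    congrArg Prod.fst (hT.equiv_mul_left h g)
  refine ⟨(y ∘L pullback κ).toLinearMap, hy.map_one, (hy.comp_pullback κ).nonneg, fun h f => ?_⟩
  calc y (pullback κ (translInfty h f))
      = (((h⁻¹ : MulAction.stabilizer G y) : G) • y) (pullback κ f) :=
        congrArg y (Subtype.ext (funext fun g => congrArg f (hκ h⁻¹ g).symm))
    _ = y (pullback κ f) := by rw [MulAction.mem_stabilizer_iff.1 (h⁻¹).2]

theorem IsAmenable.exists_isMean {H : Type*} [Group H] (hH : IsAmenable H) :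
    ∃ m : ℓ^∞(H, ℝ) →L[ℝ] ℝ, IsMean m ∧ ∀ h : H, h • m = m := by
  obtain ⟨m, h1, hm, hinv⟩ := hH
  refine ⟨meanOfPositive m h1 hm, isMean_meanOfPositive m h1 hm,
    fun h => ContinuousLinearMap.ext fun f => ?_⟩
  refine Eq.trans (congrArg m (Subtype.ext (funext fun k => ?_))) (hinv h⁻¹ f)
  exact congrArg (fun g => f (g * k)) (inv_inv h).symm

theorem mem_conjSub {g x : G} {H : Subgroup G} : x ∈ conjSub g H ↔ g⁻¹ * x * g ∈ H := by
  rw [conjSub, Subgroup.mem_map_equiv, MulAut.conj_symm_apply]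

theorem hasBasis_nhds_bot :
    (nhds (⊥ : Subgroup G)).HasBasis (fun F : Finset G => 1 ∉ F) fun F => {K | ∀ s ∈ F, s ∉ K} := by
  classical
  let ι : Subgroup G → G → Bool := fun H g => @decide (g ∈ H) (Classical.propDecidable _)
  have hι : Topology.IsInducing ι := ⟨rfl⟩
  rw [hι.nhds_eq_comap, nhds_pi]
  simp only [nhds_discrete]
  refine ((Filter.hasBasis_pi fun s => Filter.hasBasis_pure (ι ⊥ s)).comap ι).to_hasBasis ?_ ?_
  · rintro ⟨I, -⟩ ⟨hI : I.Finite, -⟩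
    refine ⟨hI.toFinset.erase 1, Finset.notMem_erase 1 _, fun K hK s hs => ?_⟩
    rcases eq_or_ne s 1 with rfl | hs1
    · simp [ι, one_mem]
    · simpa [ι, hs1] using hK s (by simpa [hs1] using hs)
  · refine fun F hF => ⟨(F, fun _ => ()), ⟨F.finite_toSet, fun _ _ => trivial⟩, ?_⟩
    intro K hK s hs
    have hs1 : s ≠ 1 := ne_of_mem_of_not_mem hs hF
    simpa [ι, hs1] using hK s hs

theorem isRecurrent_iff {H : Subgroup G} :
    IsRecurrent H ↔ ∃ F : Finset G, 1 ∉ F ∧ ∀ g, ∃ s ∈ F, g⁻¹ * s * g ∈ H := by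
  rw [IsRecurrent, mem_closure_iff_nhds_basis hasBasis_nhds_bot]
  simp only [Set.mem_ofPred_eq, ← mem_conjSub]
  push Not
  exact exists_congr fun F => and_congr_right fun _ =>
    ⟨fun h g => h _ ⟨g, rfl⟩, fun h K ⟨g, hK⟩ => hK ▸ h g⟩

end Subgroups

section IntegratedForm

variable {A : Type*} [CStarAlgebra A] (u : G →* unitary A)

/-- The extension `c ↦ ∑ c g • u g` of a unitary representation to the finitely supported functions
on the group. -/
def integratedForm : (G →₀ ℂ) →ₗ[ℂ] A := Finsupp.linearCombination ℂ fun g => (u g : A)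

theorem integratedForm_single (g : G) (z : ℂ) :
    integratedForm u (Finsupp.single g z) = z • (u g : A) :=
  Finsupp.linearCombination_single ℂ z g

theorem star_mul_integratedForm_mul (g : G) (c : G →₀ ℂ) :
    star (u g : A) * integratedForm u c * u g =
      integratedForm u (c.equivMapDomain (MulAut.conj g⁻¹).toEquiv) := by
  have hconj (s : G) : (u (g⁻¹ * s * g) : A) = star (u g : A) * u s * u g := by
    rw [map_mul, map_mul, map_inv, ← Unitary.star_eq_inv]
    rfl
  induction c using Finsupp.induction_linear with
  | zero => simp
  | add c d hc hd =>
    rw [map_add, mul_add, add_mul, hc, hd, Finsupp.equivMapDomain_eq_mapDomain,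
      Finsupp.equivMapDomain_eq_mapDomain, Finsupp.equivMapDomain_eq_mapDomain,
      Finsupp.mapDomain_add, map_add]
  | single s z =>
    rw [Finsupp.equivMapDomain_single, integratedForm_single, integratedForm_single]
    simp [← hconj]

theorem coe_adjoin_range_eq_range_integratedForm :
    (StarAlgebra.adjoin ℂ (Set.range fun g => (u g : A)) : Set A) =
      Set.range (integratedForm u) := by
  have hclosure : Submonoid.closure
      ((Set.range fun g => (u g : A)) ∪ star (Set.range fun g => (u g : A))) =
        MonoidHom.mrange ((unitary A).subtype.comp u) := by
    refine le_antisymm (Submonoid.closure_le.2 (Set.union_subset subset_rfl ?_)) fun x hx =>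
      Submonoid.subset_closure (Or.inl hx)
    rintro x ⟨g, hg⟩
    refine ⟨g⁻¹, ?_⟩
    rw [← star_star x, ← hg]
    simp [← Unitary.star_eq_inv]
  have hspan := StarAlgebra.adjoin_eq_span (R := ℂ) (Set.range fun g => (u g : A))
  rw [hclosure] at hspan
  ext a
  rw [SetLike.mem_coe, ← StarSubalgebra.mem_toSubalgebra, ← Subalgebra.mem_toSubmodule, hspan]
  exact Finsupp.mem_span_range_iff_exists_finsupp

/-- The C*-algebra generated by a unitary representation. -/
def repAlgebra : StarSubalgebra ℂ A :=
  (StarAlgebra.adjoin ℂ (Set.range fun g => (u g : A))).topologicalClosure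

theorem coe_repAlgebra : (repAlgebra u : Set A) = closure (Set.range (integratedForm u)) := by
  rw [← coe_adjoin_range_eq_range_integratedForm]
  exact StarSubalgebra.topologicalClosure_coe _

theorem isClosed_repAlgebra : IsClosed (repAlgebra u : Set A) :=
  StarSubalgebra.isClosed_topologicalClosure _

theorem integratedForm_mem_repAlgebra (c : G →₀ ℂ) : integratedForm u c ∈ repAlgebra u := by
  rw [← SetLike.mem_coe, coe_repAlgebra]
  exact subset_closure ⟨c, rfl⟩

theorem coe_mem_repAlgebra (g : G) : (u g : A) ∈ repAlgebra u := by
  simpa [integratedForm_single] using integratedForm_mem_repAlgebra u (Finsupp.single g 1)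

theorem exists_norm_sub_integratedForm_lt {a : A} (ha : a ∈ repAlgebra u) {ε : ℝ} (hε : 0 < ε) :
    ∃ c : G →₀ ℂ, ‖a - integratedForm u c‖ < ε := by
  rw [← SetLike.mem_coe, coe_repAlgebra] at ha
  obtain ⟨_, ⟨c, rfl⟩, hc⟩ := Metric.mem_closure_iff.1 ha ε hε
  exact ⟨c, dist_eq_norm a _ ▸ hc⟩

/-- The linear span of the unitaries `u g` with `g ≠ 1`. -/
def spanNeOne : Submodule ℂ A := (LinearMap.ker (Finsupp.lapply 1)).map (integratedForm u)

theorem coe_mem_spanNeOne {g : G} (hg : g ≠ 1) : (u g : A) ∈ spanNeOne u :=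
  ⟨Finsupp.single g 1, Finsupp.single_eq_of_ne hg.symm, by rw [integratedForm_single, one_smul]⟩

theorem star_mul_mul_mem_spanNeOne (g : G) {w : A} (hw : w ∈ spanNeOne u) :
    star (u g : A) * w * u g ∈ spanNeOne u := by
  obtain ⟨c, hc, rfl⟩ := hw
  refine ⟨_, ?_, (star_mul_integratedForm_mul u g c).symm⟩
  change c ((MulAut.conj g⁻¹).toEquiv.symm 1) = 0
  exact (congrArg c (map_one (MulAut.conj g⁻¹).symm)).trans hc

theorem redCstar_eq_repAlgebra : redCstar G = repAlgebra (permRep G G) := by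
  unfold redCstar repAlgebra
  simp only [← lreg_eq_permRep]

end IntegratedForm

section DiagonalCoefficients

variable {Ω : Type*}

open Classical in
/-- The point mass at `ω`, as a unit vector of `ℓ²(Ω)`. -/
def pointMass (ω : Ω) : ℓ²(Ω, ℂ) := lp.single 2 ω 1

open Classical in
theorem pointMass_apply (ω ω' : Ω) : pointMass ω ω' = if ω' = ω then 1 else 0 := by
  rw [pointMass, lp.single_apply, Pi.single_apply]

theorem norm_pointMass (ω : Ω) : ‖pointMass ω‖ = 1 := by
  classical
  rw [pointMass, lp.norm_single two_pos, norm_one]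

theorem permRep_pointMass [MulAction G Ω] (g : G) (ω : Ω) :
    (permRep G Ω g : 𝓑(Ω)) (pointMass ω) = pointMass (g • ω) := by
  classical
  exact reindexIsometry_single (by norm_num) (MulAction.toPerm g).symm ω 1

theorem eq_zero_of_forall_pointMass {a : 𝓑(Ω)} (h : ∀ ω, a (pointMass ω) = 0) : a = 0 := by
  classical
  refine ContinuousLinearMap.ext fun ξ => ?_
  have hsingle (ω : Ω) : a (lp.single 2 ω (ξ ω)) = 0 := by
    rw [← mul_one (ξ ω), ← smul_eq_mul, lp.single_smul, map_smul]
    exact (congrArg (ξ ω • ·) (h ω)).trans (smul_zero _)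
  have hsum := (lp.hasSum_single ENNReal.ofNat_ne_top ξ).mapL a
  simp only [hsingle] at hsum
  exact hsum.unique hasSum_zero

/-- The diagonal matrix coefficient `x ↦ ⟨δ_ω, x δ_ω⟩`. -/
def diagCoeff (ω : Ω) : 𝓑(Ω) →L[ℂ] ℂ :=
  lp.evalCLM ℂ (fun _ : Ω => ℂ) 2 ω ∘L ContinuousLinearMap.apply ℂ _ (pointMass ω)

theorem diagCoeff_apply (ω : Ω) (x : 𝓑(Ω)) : diagCoeff ω x = x (pointMass ω) ω := rfl

theorem norm_diagCoeff_le (ω : Ω) (x : 𝓑(Ω)) : ‖diagCoeff ω x‖ ≤ ‖x‖ :=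
  calc ‖x (pointMass ω) ω‖ ≤ ‖x (pointMass ω)‖ := lp.norm_apply_le_norm two_ne_zero _ _
    _ ≤ ‖x‖ := x.unit_le_opNorm _ (norm_pointMass ω).le

theorem diagCoeff_one (ω : Ω) : diagCoeff ω 1 = 1 :=
  (pointMass_apply ω ω).trans (if_pos rfl)

theorem nontrivial_clm_l2 [Nonempty Ω] : Nontrivial 𝓑(Ω) :=
  ‹Nonempty Ω›.elim fun ω => ⟨1, 0, fun h => one_ne_zero <| by
    rw [← diagCoeff_one ω, h, map_zero]⟩

theorem diagCoeff_star_mul_self (ω : Ω) (x : 𝓑(Ω)) :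
    diagCoeff ω (star x * x) = (‖x (pointMass ω)‖ : ℂ) ^ 2 := by
  classical
  have hinner (ξ : ℓ²(Ω, ℂ)) : inner ℂ (pointMass ω) ξ = ξ ω := by
    simp [pointMass, lp.inner_single_left]
  rw [diagCoeff_apply, ← hinner, ContinuousLinearMap.star_eq_adjoint]
  change inner ℂ (pointMass ω) (ContinuousLinearMap.adjoint x (x (pointMass ω))) = _
  rw [ContinuousLinearMap.adjoint_inner_right, inner_self_eq_norm_sq_to_K]
  rfl

open Classical in
theorem diagCoeff_integratedForm [MulAction G Ω] (ω : Ω) (c : G →₀ ℂ) :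
    diagCoeff ω (integratedForm (permRep G Ω) c) = c.sum fun g z => if g • ω = ω then z else 0 := by
  rw [integratedForm, Finsupp.linearCombination_apply, map_finsuppSum]
  refine Finsupp.sum_congr fun g _ => ?_
  rw [map_smul, diagCoeff_apply, permRep_pointMass, pointMass_apply, smul_eq_mul, mul_ite, mul_one,
    mul_zero]
  simp only [eq_comm]

theorem diagCoeff_integratedForm_regular (g : G) (c : G →₀ ℂ) :
    diagCoeff g (integratedForm (permRep G G) c) = c 1 := by
  classical
  rw [diagCoeff_integratedForm]
  simp [Finsupp.sum, eq_comm]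

end DiagonalCoefficients

section Backward

theorem one_le_norm_one_sub_of_mem_ideal {R : Type*} [NormedRing R] [CompleteSpace R]
    {I : TwoSidedIdeal R} (hI : I ≠ ⊤) {x : R} (hx : x ∈ I) : 1 ≤ ‖1 - x‖ := by
  by_contra! hlt
  obtain ⟨v, hv⟩ := (Units.oneSub _ hlt).isUnit.exists_right_inv
  rw [Units.val_oneSub, sub_sub_cancel] at hv
  exact hI ((TwoSidedIdeal.one_mem_iff I).1 (hv ▸ I.mul_mem_right x v hx))

section

variable {A : Type*} [CStarAlgebra A] {ψ : A →L[ℝ] ℝ}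

theorem IsRealState.apply_smul_one (hψ : IsRealState ψ) (c : ℂ) : ψ (c • 1) = c.re := by
  have him : ψ ((c.im * Complex.I) • 1) = 0 :=
    hψ.apply_eq_zero_of_star_eq_neg (by simp [← neg_smul])
  calc ψ (c • 1) = ψ (c.re • 1 + (c.im * Complex.I) • 1) := by
        rw [← Complex.coe_smul, ← add_smul, Complex.re_add_im]
    _ = c.re := by rw [map_add, him, map_smul, hψ.map_one, smul_eq_mul, mul_one, add_zero]

theorem IsRealState.apply_integratedForm (hψ : IsRealState ψ) (u : G →* unitary A) {c : G →₀ ℂ}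
    (h : ∀ g ∈ c.support, g ≠ 1 → ∀ z : ℂ, ψ (z • (u g : A)) = 0) :
    ψ (integratedForm u c) = (c 1).re := by
  rw [integratedForm, Finsupp.linearCombination_apply, Finsupp.sum, map_sum,
    Finset.sum_eq_single 1 (fun g hg hg1 => h g hg hg1 _) fun h1 => by
      rw [Finsupp.notMem_support_iff.1 h1, zero_smul, map_zero]]
  simpa using hψ.apply_smul_one (c 1)

/-- Since `H` is not recurrent, any finite set of nontrivial elements can be conjugated off `H`;
this turns the state `ψ`, which vanishes off `H`, into the canonical trace `τ`. -/
theorem re_trace_eq_zero_of_not_isRecurrent {H : Subgroup G} (hH : ¬IsRecurrent H)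
    (u : G →* unitary A) {τ : A →L[ℂ] ℂ} (hτ : ∀ x, ‖τ x‖ ≤ ‖x‖)
    (hτu : ∀ c, τ (integratedForm u c) = c 1) (hψ : IsRealState ψ)
    (hψH : ∀ g ∉ H, ∀ z : ℂ, ψ (z • (u g : A)) = 0) {w : A} (hw : w ∈ repAlgebra u)
    (hconj : ∀ g, ψ (star (u g : A) * w * u g) = 0) : (τ w).re = 0 := by
  classical
  rw [← abs_eq_zero]
  refine le_antisymm (le_of_forall_pos_le_add fun ε hε => ?_) (abs_nonneg _)
  obtain ⟨c, hc⟩ := exists_norm_sub_integratedForm_lt u hw (half_pos hε)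
  rw [isRecurrent_iff] at hH
  push Not at hH
  obtain ⟨g, hg⟩ := hH (c.support.erase 1) (Finset.notMem_erase 1 _)
  have hψc : ψ (star (u g : A) * integratedForm u c * u g) = (c 1).re := by
    rw [star_mul_integratedForm_mul, hψ.apply_integratedForm u, Finsupp.equivMapDomain_apply]
    · simp
    · intro s hs hs1
      refine hψH s fun hsH => ?_
      refine hg (g * s * g⁻¹) (Finset.mem_erase.2 ⟨by simpa [mul_inv_eq_one] using hs1, ?_⟩) ?_
      · simpa [Finsupp.equivMapDomain_apply] using hs
      · simpa [mul_assoc] using hsH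
  have hstate : |(c 1).re| ≤ ‖w - integratedForm u c‖ := by
    rw [← norm_star_mul_mul_unitary (u g), ← hψc, ← abs_neg]
    refine le_trans (le_of_eq ?_) (hψ.abs_apply_le _)
    rw [mul_sub, sub_mul, map_sub, hconj, zero_sub]
  have htrace : |(τ w).re - (c 1).re| ≤ ‖w - integratedForm u c‖ := by
    rw [← hτu, ← Complex.sub_re, ← map_sub]
    exact (Complex.abs_re_le_norm _).trans (hτ _)
  linarith [abs_sub_abs_le_abs_sub (τ w).re (c 1).re]

end

theorem eq_zero_of_forall_re_diagCoeff_eq_zero {a : 𝓑(G)}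
    (h : ∀ g, (diagCoeff 1 (star (permRep G G g : 𝓑(G)) * (star a * a) *
      (permRep G G g : 𝓑(G)))).re = 0) : a = 0 := by
  refine eq_zero_of_forall_pointMass fun g => ?_
  have hg := h g
  rw [← mul_assoc, ← star_mul, mul_assoc, diagCoeff_star_mul_self, mul_apply_eq_comp,
    permRep_pointMass, smul_eq_mul, mul_one] at hg
  norm_cast at hg
  exact norm_eq_zero.1 ((pow_eq_zero_iff two_ne_zero).1 hg)

theorem isCstarSimple_of_forall_not_isRecurrent
    (hG : ∀ H : Subgroup G, IsAmenable H → ¬IsRecurrent H) : IsCstarSimple G := by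
  obtain ⟨N, hN⟩ := exists_isMinimalLeftIdeal G
  obtain ⟨y, hy⟩ := hN.extremePoints_nonempty
  have hstab := hG _ (hN.prop.isMean y hy.1).isAmenable_stabilizer
  have : Nontrivial 𝓑(G) := nontrivial_clm_l2
  rw [IsCstarSimple, redCstar_eq_repAlgebra]
  have : CompleteSpace (repAlgebra (permRep G G)) :=
    (isClosed_repAlgebra (permRep G G)).completeSpace_coe
  refine fun I _ => or_iff_not_imp_right.2 fun hI => eq_bot_iff.2 fun a ha => ?_
  let W : Submodule ℂ 𝓑(G) :=
    (I.asIdeal.restrictScalars ℂ).map (repAlgebra (permRep G G)).subtype.toLinearMap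
  have hW : ∀ w ∈ W, 1 ≤ ‖1 - w‖ := by
    rintro _ ⟨x, hx, rfl⟩
    exact one_le_norm_one_sub_of_mem_ideal hI (TwoSidedIdeal.mem_asIdeal.1 hx)
  have hconj : ∀ g, ∀ w ∈ W,
      star (permRep G G g : 𝓑(G)) * w * (permRep G G g : 𝓑(G)) ∈ W := by
    rintro g _ ⟨x, hx, rfl⟩
    let lam : repAlgebra (permRep G G) := ⟨_, coe_mem_repAlgebra (permRep G G) g⟩
    exact ⟨star lam * x * lam, I.mul_mem_right _ _ (I.mul_mem_left _ _ hx), rfl⟩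
  obtain ⟨ψ, hψ, hψW, -, hψy⟩ := hN.exists_isRealState_multiplicative (permCovariantRep G G)
    (s := id) hy hy.1 (fun g ω => mul_smul g ω y) hW hconj
  have htrace : ∀ w ∈ W, (diagCoeff 1 w).re = 0 := by
    rintro _ ⟨x, hx, rfl⟩
    exact re_trace_eq_zero_of_not_isRecurrent hstab (permRep G G) (norm_diagCoeff_le 1)
      (diagCoeff_integratedForm_regular 1) hψ (fun g hg => hψy g hg) x.2
      fun g => hψW _ (hconj g _ ⟨x, hx, rfl⟩)
  exact Subtype.ext <| eq_zero_of_forall_re_diagCoeff_eq_zero fun g =>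
    htrace _ (hconj g _ ⟨star a * a, I.mul_mem_left _ _ ha, rfl⟩)

end Backward

section NormDomination

variable {A B : Type*} [CStarAlgebra A] [CStarAlgebra B] (u : G →* unitary A) (v : G →* unitary B)

/-- The direct sum of two unitary representations. -/
def prodRep : G →* unitary (A × B) where
  toFun g := ⟨(u g, v g), Unitary.mem_iff.2
    ⟨Prod.ext (Unitary.coe_star_mul_self _) (Unitary.coe_star_mul_self _),
      Prod.ext (Unitary.coe_mul_star_self _) (Unitary.coe_mul_star_self _)⟩⟩
  map_one' := Subtype.ext <| by simp [Prod.one_eq_mk]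
  map_mul' g h := Subtype.ext <| by simp

theorem integratedForm_prodRep (c : G →₀ ℂ) :
    integratedForm (prodRep u v) c = (integratedForm u c, integratedForm v c) := by
  induction c using Finsupp.induction_linear with
  | zero => simp [Prod.zero_eq_mk]
  | add c d hc hd => simp [hc, hd]
  | single g z => simp only [integratedForm_single]; rfl

theorem fst_mem_repAlgebra {x : A × B} (hx : x ∈ repAlgebra (prodRep u v)) :
    x.1 ∈ repAlgebra u := by
  rw [← SetLike.mem_coe, coe_repAlgebra] at hx
  refine closure_minimal (t := Prod.fst ⁻¹' (repAlgebra u : Set A)) ?_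
    ((isClosed_repAlgebra u).preimage continuous_fst) hx
  rintro _ ⟨c, rfl⟩
  rw [integratedForm_prodRep]
  exact integratedForm_mem_repAlgebra u c

theorem mul_prodMk_zero_mem_repAlgebra {x y : A} (hx : x ∈ repAlgebra u)
    (hy : (y, (0 : B)) ∈ repAlgebra (prodRep u v)) :
    (x * y, (0 : B)) ∈ repAlgebra (prodRep u v) := by
  rw [← SetLike.mem_coe, coe_repAlgebra] at hx
  refine closure_minimal (t := (fun x : A => (x * y, (0 : B))) ⁻¹' (repAlgebra (prodRep u v)))
    ?_ ((isClosed_repAlgebra _).preimage (by fun_prop)) hx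
  rintro _ ⟨c, rfl⟩
  simpa [integratedForm_prodRep] using mul_mem (integratedForm_mem_repAlgebra (prodRep u v) c) hy

theorem prodMk_zero_mul_mem_repAlgebra {x y : A} (hx : x ∈ repAlgebra u)
    (hy : (y, (0 : B)) ∈ repAlgebra (prodRep u v)) :
    (y * x, (0 : B)) ∈ repAlgebra (prodRep u v) := by
  have hstar : (star y, (0 : B)) ∈ repAlgebra (prodRep u v) := by
    simpa [Prod.star_def] using star_mem hy
  simpa [Prod.star_def] using star_mem (mul_prodMk_zero_mem_repAlgebra u v (star_mem hx) hstar)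

/-- The kernel of the quotient map from the algebra generated by `u ⊕ v` to the one generated by
`v`, as an ideal of the algebra generated by `u`. -/
def sndKernel : TwoSidedIdeal (repAlgebra u) :=
  TwoSidedIdeal.mk' {x | ((x : A), (0 : B)) ∈ repAlgebra (prodRep u v)}
    (zero_mem (repAlgebra (prodRep u v)))
    (fun hx hy => by simpa using (repAlgebra (prodRep u v)).add_mem hx hy)
    (fun hx => by simpa using (repAlgebra (prodRep u v)).neg_mem hx)
    (fun {x} _ hy => mul_prodMk_zero_mem_repAlgebra u v x.2 hy)
    (fun {_} y hx => prodMk_zero_mul_mem_repAlgebra u v y.2 hx)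

theorem mem_sndKernel {x : repAlgebra u} :
    x ∈ sndKernel u v ↔ ((x : A), (0 : B)) ∈ repAlgebra (prodRep u v) :=
  TwoSidedIdeal.mem_mk' _ _ _ _ _ _ x

theorem isClosed_sndKernel : IsClosed (sndKernel u v : Set (repAlgebra u)) := by
  have hpre : (sndKernel u v : Set (repAlgebra u)) =
      (fun x : repAlgebra u => ((x : A), (0 : B))) ⁻¹' (repAlgebra (prodRep u v)) :=
    Set.ext fun _ => mem_sndKernel u v
  rw [hpre]
  exact (isClosed_repAlgebra _).preimage (continuous_subtype_val.prodMk continuous_const)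

variable {u v}

theorem sndKernel_ne_top {p : B →L[ℂ] ℂ} (hp₁ : p 1 ≠ 0)
    (hp : ∀ c, ‖p (integratedForm v c)‖ ≤ ‖integratedForm u c‖) : sndKernel u v ≠ ⊤ := by
  intro htop
  have hdom : ∀ x ∈ repAlgebra (prodRep u v), ‖p x.2‖ ≤ ‖x.1‖ := by
    intro x hx
    rw [← SetLike.mem_coe, coe_repAlgebra] at hx
    refine closure_minimal (t := {x | ‖p x.2‖ ≤ ‖x.1‖}) ?_
      (isClosed_le (p.continuous.comp continuous_snd).norm continuous_fst.norm) hx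
    rintro _ ⟨c, rfl⟩
    rw [integratedForm_prodRep]
    exact hp c
  have hone : ((1 : A), (0 : B)) ∈ repAlgebra (prodRep u v) :=
    (mem_sndKernel u v (x := 1)).1 (htop ▸ trivial)
  exact hp₁ (by simpa using hdom _ (sub_mem (one_mem _) hone))

/-- The functional `p` makes `sndKernel u v` a proper ideal, so it is zero, and the projection
onto `B` is an injective, hence isometric, star homomorphism. -/
theorem norm_integratedForm_le_of_isSimple
    (hsimple : ∀ I : TwoSidedIdeal (repAlgebra u), IsClosed (I : Set (repAlgebra u)) →
      I = ⊥ ∨ I = ⊤) {p : B →L[ℂ] ℂ} (hp₁ : p 1 ≠ 0)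
    (hp : ∀ c, ‖p (integratedForm v c)‖ ≤ ‖integratedForm u c‖) (c : G →₀ ℂ) :
    ‖integratedForm u c‖ ≤ ‖integratedForm v c‖ := by
  have hbot := (hsimple _ (isClosed_sndKernel u v)).resolve_right (sndKernel_ne_top hp₁ hp)
  have : IsClosed (repAlgebra (prodRep u v) : Set (A × B)) := isClosed_repAlgebra _
  let φ : repAlgebra (prodRep u v) →⋆ₐ[ℂ] B :=
    (StarAlgHom.snd ℂ A B).comp (repAlgebra (prodRep u v)).subtype
  have hφ : Function.Injective φ := by
    refine (injective_iff_map_eq_zero φ).2 fun x (hx : (x : A × B).2 = 0) => ?_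
    have hx' : (⟨(x : A × B).1, fst_mem_repAlgebra u v x.2⟩ : repAlgebra u) ∈ sndKernel u v :=
      (mem_sndKernel u v).2 (hx ▸ x.2)
    rw [hbot, TwoSidedIdeal.mem_bot] at hx'
    exact Subtype.ext (Prod.ext (congrArg Subtype.val hx') hx)
  let x : repAlgebra (prodRep u v) := ⟨_, integratedForm_mem_repAlgebra (prodRep u v) c⟩
  have hx : (x : A × B) = (integratedForm u c, integratedForm v c) := integratedForm_prodRep u v c
  calc ‖integratedForm u c‖ ≤ ‖(x : A × B)‖ := by
        rw [hx]
        exact norm_fst_le (integratedForm u c, integratedForm v c)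
    _ = ‖φ x‖ := (NonUnitalStarAlgHom.norm_map φ hφ x).symm
    _ = ‖integratedForm v c‖ := congrArg (‖Prod.snd ·‖) hx

end NormDomination

section Reiter

theorem IsMean.mem_closure_convexHull {Ω E : Type*} [NormedAddCommGroup E] [NormedSpace ℝ E]
    {m : ℓ^∞(Ω, ℝ) →L[ℝ] ℝ} (hm : IsMean m) {v : Ω → E} {x : E}
    (hx : ∀ f : StrongDual ℝ E, ∃ k : ℓ^∞(Ω, ℝ), (∀ ω, k ω = f (v ω)) ∧ m k = f x) :
    x ∈ closure (convexHull ℝ (Set.range v)) := by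
  by_contra hnot
  obtain ⟨f, c, hfx, hfc⟩ :=
    geometric_hahn_banach_point_closed (convex_convexHull ℝ _).closure isClosed_closure hnot
  obtain ⟨k, hk, hkx⟩ := hx f
  refine hfx.not_ge (hkx ▸ hm.le_of_forall_ge fun ω => ?_)
  rw [hk]
  exact (hfc _ (subset_closure (subset_convexHull ℝ _ ⟨ω, rfl⟩))).le

variable {H Ω : Type*} [Group H] [MulAction H Ω]

/-- The translation `(h • p) ω = p (h⁻¹ • ω)` on `ℓ¹(Ω)`. -/
def translateL1 (h : H) : ℓ¹(Ω, ℝ) ≃ₗᵢ[ℝ] ℓ¹(Ω, ℝ) :=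
  reindexIsometry (by norm_num) (MulAction.toPerm h).symm

open Classical in
/-- **Reiter's condition**, by Namioka's trick: an invariant mean puts `0` in the weak closure of
the convex set of vectors `(translateL1 s p - p)_s`, which is its norm closure. -/
theorem IsAmenable.exists_norm_translateL1_sub_lt (hH : IsAmenable H) (ω₀ : Ω) (S : Finset H)
    {ε : ℝ} (hε : 0 < ε) :
    ∃ p ∈ convexHull ℝ (Set.range fun h : H => (lp.single 1 (h • ω₀) 1 : ℓ¹(Ω, ℝ))),
      ∀ s ∈ S, ‖translateL1 s p - p‖ < ε := by
  obtain ⟨m, hm, hinv⟩ := hH.exists_isMean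
  let δ (h : H) : ℓ¹(Ω, ℝ) := lp.single 1 (h • ω₀) 1
  have hδ (h k : H) : translateL1 h (δ k) = δ (h * k) :=
    (reindexIsometry_single _ _ _ _).trans (congrArg (lp.single 1 · 1) (mul_smul h k ω₀).symm)
  let D : ℓ¹(Ω, ℝ) →ₗ[ℝ] S → ℓ¹(Ω, ℝ) :=
    LinearMap.pi fun s => (translateL1 (s : H)).toLinearEquiv.toLinearMap - LinearMap.id
  have hzero : 0 ∈ closure (convexHull ℝ (Set.range (D ∘ δ))) := by
    refine hm.mem_closure_convexHull fun f => ?_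
    let φ (s : S) : StrongDual ℝ ℓ¹(Ω, ℝ) := f ∘L ContinuousLinearMap.single ℝ (fun _ => ℓ¹(Ω, ℝ)) s
    let k (s : S) : ℓ^∞(H, ℝ) := ⟨fun h => φ s (δ h), memℓp_infty ⟨‖φ s‖, by
      rintro _ ⟨h, rfl⟩
      exact (φ s).unit_le_opNorm _ (by simp [δ, lp.norm_single])⟩⟩
    refine ⟨∑ s : S, (pullback ((s : H) * ·) (k s) - k s), fun h => ?_, ?_⟩
    · have hsum : f (D (δ h)) = ∑ s : S, φ s (D (δ h) s) := by
        conv_lhs => rw [← Finset.univ_sum_single (D (δ h)), map_sum]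
        rfl
      rw [lp.coeFn_sum, Finset.sum_apply, Function.comp_apply, hsum]
      refine Finset.sum_congr rfl fun s _ => ?_
      have hD : D (δ h) s = δ (s * h) - δ h := congrArg (· - δ h) (hδ s h)
      rw [hD, map_sub]
      rfl
    · rw [map_sum, map_zero]
      refine Finset.sum_eq_zero fun s _ => ?_
      rw [map_sub, sub_eq_zero]
      exact congrArg (· (k s)) (hinv s)
  rw [Set.range_comp, ← LinearMap.image_convexHull] at hzero
  obtain ⟨_, ⟨p, hp, rfl⟩, hlt⟩ := Metric.mem_closure_iff.1 hzero ε hε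
  rw [dist_zero_left] at hlt
  exact ⟨p, hp, fun s hs => (norm_le_pi_norm (D p) ⟨s, hs⟩).trans_lt hlt⟩

theorem nonneg_norm_eq_one_support_of_mem_convexHull {ι : Type*} [DecidableEq Ω] {v : ι → Ω}
    {p : ℓ¹(Ω, ℝ)}
    (hp : p ∈ convexHull ℝ (Set.range fun i => (lp.single 1 (v i) 1 : ℓ¹(Ω, ℝ)))) :
    (∀ ω, 0 ≤ p ω) ∧ ‖p‖ = 1 ∧ ∀ ω ∉ Set.range v, p ω = 0 := by
  have hsub : convexHull ℝ (Set.range fun i => (lp.single 1 (v i) 1 : ℓ¹(Ω, ℝ))) ⊆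
      {q | (∀ ω, 0 ≤ q ω) ∧ HasSum q 1 ∧ ∀ ω ∉ Set.range v, q ω = 0} := by
    refine convexHull_min ?_ ?_
    · rintro _ ⟨i, rfl⟩
      simp only [Set.mem_ofPred_eq, lp.coeFn_single]
      have hsingle : (0 : Ω → ℝ) ≤ Pi.single (v i) 1 := Pi.single_nonneg.2 zero_le_one
      exact ⟨hsingle, hasSum_pi_single _ _,
        fun ω hω => Pi.single_eq_of_ne (fun h => hω ⟨i, h.symm⟩) _⟩
    · rintro q ⟨hq₀, hq₁, hq⟩ r ⟨hr₀, hr₁, hr⟩ a b ha hb hab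
      refine ⟨fun ω => add_nonneg (mul_nonneg ha (hq₀ ω)) (mul_nonneg hb (hr₀ ω)), ?_,
        fun ω hω => ?_⟩
      · have hsum := (hq₁.mul_left a).add (hr₁.mul_left b)
        rwa [mul_one, mul_one, hab] at hsum
      · change a * q ω + b * r ω = 0
        rw [hq ω hω, hr ω hω, mul_zero, mul_zero, add_zero]
  obtain ⟨hp₀, hp₁, hsupp⟩ := hsub hp
  refine ⟨hp₀, ?_, hsupp⟩
  have hnorm := lp.hasSum_norm (by norm_num) p
  simp only [ENNReal.toReal_one, Real.rpow_one, Real.norm_of_nonneg (hp₀ _)] at hnorm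
  exact hnorm.unique hp₁

theorem sq_abs_sqrt_sub_sqrt_le (a b : ℝ) : |√a - √b| ^ 2 ≤ |a - b| :=
  calc |√a - √b| ^ 2 ≤ |√a - √b| * (√a + √b) := by
        rw [sq]
        gcongr
        rw [abs_le]
        constructor <;> linarith [Real.sqrt_nonneg a, Real.sqrt_nonneg b]
    _ = |√a ^ 2 - √b ^ 2| := by
        rw [sq_sub_sq, abs_mul, abs_of_nonneg (by positivity : 0 ≤ √a + √b), mul_comm]
    _ = |max a 0 - max b 0| := by rw [Real.sq_sqrt', Real.sq_sqrt']
    _ ≤ |a - b| := abs_max_sub_max_le_abs a b 0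

theorem memℓp_sqrt (p : ℓ¹(Ω, ℝ)) : Memℓp (fun ω => (√(p ω) : ℂ)) 2 := by
  refine memℓp_gen (((lp.memℓp p).summable (by norm_num)).of_nonneg_of_le (fun ω => by positivity)
    fun ω => ?_)
  simpa [Complex.norm_real] using sq_abs_sqrt_sub_sqrt_le (p ω) 0

/-- The vector `ω ↦ √(p ω)` of `ℓ²(Ω)` attached to `p ∈ ℓ¹(Ω)`; the real square root of a negative
number is `0`. -/
def sqrtVector (p : ℓ¹(Ω, ℝ)) : ℓ²(Ω, ℂ) := ⟨fun ω => (√(p ω) : ℂ), memℓp_sqrt p⟩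

theorem sqrtVector_apply (p : ℓ¹(Ω, ℝ)) (ω : Ω) : sqrtVector p ω = (√(p ω) : ℂ) := rfl

theorem norm_sqrtVector {p : ℓ¹(Ω, ℝ)} (hp : ∀ ω, 0 ≤ p ω) : ‖sqrtVector p‖ = √‖p‖ := by
  have hsq := lp.hasSum_norm (by norm_num) (sqrtVector p)
  have hp₁ := lp.hasSum_norm (by norm_num) p
  simp only [sqrtVector_apply, Complex.norm_real, Real.norm_of_nonneg (Real.sqrt_nonneg _),
    Real.norm_of_nonneg (hp _), ENNReal.toReal_one, ENNReal.toReal_ofNat, Real.rpow_one,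
    Real.rpow_two, Real.sq_sqrt (hp _)] at hsq hp₁
  exact (Real.sqrt_eq_iff_eq_sq (norm_nonneg _) (norm_nonneg _)).2 (hp₁.unique hsq) |>.symm

theorem sq_norm_sqrtVector_sub_le (p q : ℓ¹(Ω, ℝ)) :
    ‖sqrtVector p - sqrtVector q‖ ^ 2 ≤ ‖p - q‖ := by
  have hsq := lp.hasSum_norm (by norm_num) (sqrtVector p - sqrtVector q)
  have hp₁ := lp.hasSum_norm (by norm_num) (p - q)
  simp only [lp.coeFn_sub, Pi.sub_apply, sqrtVector_apply, ← Complex.ofReal_sub, Complex.norm_real,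
    ENNReal.toReal_one, ENNReal.toReal_ofNat, Real.rpow_one, Real.rpow_two] at hsq hp₁
  exact hasSum_le (fun ω => sq_abs_sqrt_sub_sqrt_le (p ω) (q ω)) hsq hp₁

theorem inner_permRep_eq_zero {K : Subgroup G} {ξ : ℓ²(G, ℂ)} (hξ : ∀ k ∉ K, ξ k = 0) {g : G}
    (hg : g ∉ K) : inner ℂ ξ ((permRep G G g : 𝓑(G)) ξ) = 0 := by
  rw [lp.inner_eq_tsum]
  refine (tsum_congr fun k => ?_).trans tsum_zero
  by_cases hk : k ∈ K
  · have hgk : g⁻¹ • k ∉ K := by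
      rwa [smul_eq_mul, K.mul_mem_cancel_right hk, K.inv_mem_iff]
    rw [permRep_apply, hξ _ hgk, inner_zero_right]
  · rw [hξ k hk, inner_zero_left]

open Classical in
theorem IsAmenable.exists_norm_inner_permRep_sub_lt {K : Subgroup G} (hK : IsAmenable K)
    (S : Finset G) {ε : ℝ} (hε : 0 < ε) :
    ∃ ξ : ℓ²(G, ℂ), ‖ξ‖ = 1 ∧ ∀ g ∈ S,
      ‖inner ℂ ξ ((permRep G G g : 𝓑(G)) ξ) - if g ∈ K then 1 else 0‖ < ε := by
  obtain ⟨p, hp, hinv⟩ :=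
    hK.exists_norm_translateL1_sub_lt (1 : G) (S.subtype (· ∈ K)) (pow_pos hε 2)
  obtain ⟨hp₀, hp₁, hsupp⟩ := nonneg_norm_eq_one_support_of_mem_convexHull hp
  have hnorm : ‖sqrtVector p‖ = 1 := by rw [norm_sqrtVector hp₀, hp₁, Real.sqrt_one]
  refine ⟨sqrtVector p, hnorm, fun g hg => ?_⟩
  split_ifs with hgK
  · have hone : (1 : ℂ) = inner ℂ (sqrtVector p) (sqrtVector p) := by
      rw [inner_self_eq_norm_sq_to_K, hnorm, RCLike.ofReal_one, one_pow]
    rw [hone, ← inner_sub_right]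
    refine (norm_inner_le_norm _ _).trans_lt ?_
    rw [hnorm, one_mul]
    refine lt_of_pow_lt_pow_left₀ 2 hε.le ?_
    exact (sq_norm_sqrtVector_sub_le (translateL1 (⟨g, hgK⟩ : K) p) p).trans_lt
      (hinv ⟨g, hgK⟩ (Finset.mem_subtype.2 hg))
  · rw [inner_permRep_eq_zero (K := K) (fun k hk => ?_) hgK, sub_zero, norm_zero]
    · exact hε
    · rw [sqrtVector_apply, hsupp k, Real.sqrt_zero, Complex.ofReal_zero]
      rintro ⟨h, rfl⟩
      exact hk (K.mul_mem h.2 K.one_mem)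

open Classical in
theorem IsAmenable.norm_sum_le_norm_integratedForm {K : Subgroup G} (hK : IsAmenable K)
    (c : G →₀ ℂ) :
    ‖c.sum fun g z => if g ∈ K then z else 0‖ ≤ ‖integratedForm (permRep G G) c‖ := by
  set x := integratedForm (permRep G G) c
  set C := c.sum fun _ z => ‖z‖
  have hC : 0 ≤ C := Finset.sum_nonneg fun _ _ => norm_nonneg _
  refine le_of_forall_pos_le_add fun ε hε => ?_
  obtain ⟨ξ, hξ, happrox⟩ :=
    hK.exists_norm_inner_permRep_sub_lt c.support (div_pos hε (by linarith : 0 < C + 1))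
  have hinner : inner ℂ ξ (x ξ) - c.sum (fun g z => if g ∈ K then z else 0) =
      c.sum fun g z => z * (inner ℂ ξ ((permRep G G g : 𝓑(G)) ξ) -
        if g ∈ K then 1 else 0) := by
    rw [show x = c.sum fun g z => z • (permRep G G g : 𝓑(G)) from
      Finsupp.linearCombination_apply ℂ c]
    simp only [Finsupp.sum, sum_apply, smul_apply,
      inner_sum, inner_smul_right, mul_sub, mul_ite, mul_one, mul_zero, Finset.sum_sub_distrib]
  have hdist : ‖inner ℂ ξ (x ξ) - c.sum fun g z => if g ∈ K then z else 0‖ ≤ ε :=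
    calc _ ≤ c.sum fun _ z => ‖z‖ * (ε / (C + 1)) := by
          rw [hinner]
          refine norm_sum_le_of_le _ fun g hg => ?_
          rw [norm_mul]
          exact mul_le_mul_of_nonneg_left (happrox g hg).le (norm_nonneg _)
      _ = C * (ε / (C + 1)) := (Finset.sum_mul _ _ _).symm
      _ ≤ ε := by
          rw [mul_div_assoc', div_le_iff₀ (by linarith)]
          nlinarith
  have hbound : ‖inner ℂ ξ (x ξ)‖ ≤ ‖x‖ := by
    refine (norm_inner_le_norm _ _).trans ?_
    rw [hξ, one_mul]
    exact x.unit_le_opNorm ξ hξ.le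
  calc ‖c.sum fun g z => if g ∈ K then z else 0‖
      ≤ ‖inner ℂ ξ (x ξ)‖ + ‖inner ℂ ξ (x ξ) - c.sum fun g z => if g ∈ K then z else 0‖ :=
        norm_le_norm_add_norm_sub _ _
    _ ≤ ‖x‖ + ε := add_le_add hbound hdist

theorem norm_diagCoeff_integratedForm_le [MulAction G Ω] {ω : Ω}
    (hω : IsAmenable (MulAction.stabilizer G ω)) (c : G →₀ ℂ) :
    ‖diagCoeff ω (integratedForm (permRep G Ω) c)‖ ≤ ‖integratedForm (permRep G G) c‖ := by
  classical
  rw [diagCoeff_integratedForm]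
  simpa only [MulAction.mem_stabilizer_iff] using hω.norm_sum_le_norm_integratedForm c

end Reiter

section Forward

variable {Ω : Type*} [MulAction G Ω]

theorem IsCstarSimple.norm_integratedForm_le (hG : IsCstarSimple G) {ω : Ω}
    (hω : IsAmenable (MulAction.stabilizer G ω)) (c : G →₀ ℂ) :
    ‖integratedForm (permRep G G) c‖ ≤ ‖integratedForm (permRep G Ω) c‖ := by
  rw [IsCstarSimple, redCstar_eq_repAlgebra] at hG
  exact norm_integratedForm_le_of_isSimple hG ((diagCoeff_one ω).trans_ne one_ne_zero)
    (norm_diagCoeff_integratedForm_le hω) c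

theorem IsCstarSimple.one_le_norm_one_sub (hG : IsCstarSimple G) {ω : Ω}
    (hω : IsAmenable (MulAction.stabilizer G ω)) {w : 𝓑(Ω)}
    (hw : w ∈ spanNeOne (permRep G Ω)) : 1 ≤ ‖1 - w‖ := by
  obtain ⟨c, hc, rfl⟩ := hw
  have hc₁ : c 1 = 0 := hc
  have hone : integratedForm (permRep G Ω) (Finsupp.single 1 1) = 1 := by
    rw [integratedForm_single, map_one, one_smul, OneMemClass.coe_one]
  calc (1 : ℝ) = ‖(Finsupp.single 1 1 - c : G →₀ ℂ) 1‖ := by simp [hc₁]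
    _ = ‖diagCoeff 1 (integratedForm (permRep G G) (Finsupp.single 1 1 - c))‖ := by
        rw [diagCoeff_integratedForm_regular]
    _ ≤ ‖integratedForm (permRep G G) (Finsupp.single 1 1 - c)‖ := norm_diagCoeff_le _ _
    _ ≤ ‖integratedForm (permRep G Ω) (Finsupp.single 1 1 - c)‖ :=
        hG.norm_integratedForm_le hω _
    _ = ‖1 - integratedForm (permRep G Ω) c‖ := by rw [map_sub, hone]

theorem IsClosedLeftIdeal.exists_forall_smul_eq {N : Set (ℓ^∞(G, ℝ) →L[ℝ] ℝ)}
    (hN : IsClosedLeftIdeal N) {H : Subgroup G} (hH : IsAmenable H) :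
    ∃ q ∈ N, ∀ h ∈ H, h • q = q := by
  obtain ⟨m, hm, hinv⟩ := hH.exists_isMean
  obtain ⟨y, hy⟩ := hN.nonempty
  refine ⟨conv (m ∘L pullback Subtype.val) y, hN.conv_mem _ y (hm.comp_pullback _) hy,
    fun h hh => ContinuousLinearMap.ext fun f => ?_⟩
  let φ : ℓ^∞(H, ℝ) := poisson y Subtype.val f
  calc m (poisson y Subtype.val (pullback (h * ·) f)) = ((⟨h, hh⟩ : H) • m) φ :=
        congrArg m (Subtype.ext (funext fun k => congrArg (· f) (mul_smul h (k : G) y).symm))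
    _ = m φ := congrArg (· φ) (hinv ⟨h, hh⟩)

theorem IsMean.exists_apply_ne_zero {X ι : Type*} {m : ℓ^∞(X, ℝ) →L[ℝ] ℝ} (hm : IsMean m)
    {F : Finset ι} {i : X → ι} (hi : ∀ x, i x ∈ F) :
    ∃ j ∈ F, ∃ k : ℓ^∞(X, ℝ), m k ≠ 0 ∧ ∀ x, i x ≠ j → k x = 0 := by
  classical
  let k (j : ι) : ℓ^∞(X, ℝ) := ⟨fun x => if i x = j then 1 else 0, memℓp_infty ⟨1, by
    rintro _ ⟨x, rfl⟩
    dsimp only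
    split_ifs <;> simp⟩⟩
  have hone : ∑ j ∈ F, k j = 1 := by
    refine Subtype.ext (funext fun x => ?_)
    rw [lp.coeFn_sum, Finset.sum_apply]
    exact (Finset.sum_ite_eq F (i x) 1).trans (if_pos (hi x))
  have hsum : ∑ j ∈ F, m (k j) ≠ 0 := by
    rw [← map_sum, hone, hm.map_one]
    exact one_ne_zero
  obtain ⟨j, hj, hne⟩ := Finset.exists_ne_zero_of_sum_ne_zero hsum
  exact ⟨j, hj, k j, hne, fun x hx => if_neg hx⟩

theorem IsMinimalLeftIdeal.exists_smul_eq {N : Set (ℓ^∞(G, ℝ) →L[ℝ] ℝ)}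
    (hN : IsMinimalLeftIdeal N) {y : ℓ^∞(G, ℝ) →L[ℝ] ℝ} (hy : y ∈ N.extremePoints ℝ)
    {H : Subgroup G} (hH : IsAmenable H) {F : Finset G}
    (hF : ∀ g, ∃ s ∈ F, g⁻¹ * s * g ∈ H) : ∃ s ∈ F, s • y = y := by
  obtain ⟨q, hqN, hq⟩ := hN.prop.exists_forall_smul_eq hH
  obtain ⟨m, hm, rfl⟩ := hN.exists_eq_conv hqN hy.1
  choose i hiF hi using hF
  obtain ⟨j, hj, k, hk, hkj⟩ := hm.exists_apply_ne_zero hiF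
  have hmul := apply_mul_of_mem_extremePoints
    (fun ν hν => hN.prop.conv_mem ν q hν hqN) hm hy k
  have hfix (g : G) : i g • g • q = g • q := by
    rw [← inv_smul_eq_iff, smul_smul, smul_smul, hq _ (hi g)]
  refine ⟨j, hj, ContinuousLinearMap.ext fun f => mul_left_cancel₀ hk ?_⟩
  calc m k * (j • conv m q) f = m (k * poisson q id (pullback (j * ·) f)) := (hmul _).symm
    _ = m (k * poisson q id f) := by
        refine congrArg m (Subtype.ext (funext fun g => ?_))
        by_cases hg : i g = j
        · exact congrArg (k g * ·) (congrArg (· f) (hg ▸ hfix g))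
        · exact (congrArg (· * _) (hkj g hg)).trans <|
            (zero_mul _).trans ((congrArg (· * _) (hkj g hg)).trans (zero_mul _)).symm
    _ = m k * conv m q f := hmul f

theorem exists_irredundant_cover {ι X : Type*} [Nonempty X] {F : Finset ι} {C : ι → Set X}
    (hF : ∀ x, ∃ i ∈ F, x ∈ C i) :
    ∃ i ∈ F, ∃ S : Finset ι, (∀ x ∉ C i, ∃ j ∈ S, x ∈ C j) ∧ ∃ x₀, ∀ j ∈ S, x₀ ∉ C j := by
  classical
  obtain ⟨F', ⟨hsub, hcov⟩, hmin⟩ := exists_minimal_of_wellFoundedLT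
    (fun S : Finset ι => S ⊆ F ∧ ∀ x, ∃ i ∈ S, x ∈ C i) ⟨F, subset_rfl, hF⟩
  obtain ⟨i, hi, -⟩ := hcov (Classical.arbitrary X)
  refine ⟨i, hsub hi, F'.erase i, fun x hx => ?_, ?_⟩
  · obtain ⟨j, hj, hjx⟩ := hcov x
    exact ⟨j, Finset.mem_erase.2 ⟨fun h => hx (h ▸ hjx), hj⟩, hjx⟩
  · by_contra! hcon
    exact Finset.notMem_erase i F'
      (hmin ⟨(Finset.erase_subset i F').trans hsub, hcon⟩ (Finset.erase_subset i F') hi)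

/-- The function is a product of Poisson transforms of `f - f (j ·)`, which vanish where `j` fixes
`s ω • y₀`. -/
theorem exists_apply_mul_M_eq_mul {D : Type*} [CStarAlgebra D] (ρ : CovariantRep G Ω D)
    {ψ : D →L[ℝ] ℝ} {y y₀ : ℓ^∞(G, ℝ) →L[ℝ] ℝ} {s : Ω → G}
    (hψ : ∀ f x, ψ (x * ρ.M (poisson y₀ s f)) = ψ x * y f) {S : Finset G}
    (hS : ∀ j ∈ S, j • y ≠ y) :
    ∃ (k : ℓ^∞(Ω, ℝ)) (r : ℝ), r ≠ 0 ∧ (∀ x, ψ (x * ρ.M k) = ψ x * r) ∧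
      ∀ j ∈ S, ∀ ω, j • s ω • y₀ = s ω • y₀ → k ω = 0 := by
  classical
  induction S using Finset.induction_on with
  | empty => exact ⟨1, 1, one_ne_zero, fun x => by rw [map_one, mul_one, mul_one], by simp⟩
  | insert j S _ ih =>
    obtain ⟨k, r, hr, hψk, hk⟩ := ih fun i hi => hS i (Finset.mem_insert_of_mem hi)
    obtain ⟨f, hf⟩ : ∃ f, (j • y) f ≠ y f :=
      DFunLike.ne_iff.1 (hS j (Finset.mem_insert_self j S))
    let v := f - pullback (j * ·) f
    have hv : y v = y f - (j • y) f := map_sub y _ _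
    refine ⟨k * poisson y₀ s v, r * y v, mul_ne_zero hr (hv ▸ sub_ne_zero.2 hf.symm),
      fun x => by rw [map_mul ρ.M, ← mul_assoc, hψ, hψk, mul_assoc], fun i hi ω hω => ?_⟩
    rcases Finset.mem_insert.1 hi with rfl | hi
    · have hzero : poisson y₀ s v ω = 0 :=
        calc (s ω • y₀) v = (s ω • y₀) f - (i • s ω • y₀) f := map_sub (s ω • y₀) _ _
          _ = 0 := by rw [hω, sub_self]
      exact (congrArg (k ω * ·) hzero).trans (mul_zero _)
    · exact (congrArg (· * _) (hk i hi ω hω)).trans (zero_mul _)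

/-- If some element of `F` fixed each point of the orbit, one could cut it down with an
irredundant cover by fixed point sets: a state killing every `u g` with `g ≠ 1` would be nonzero
on a function `k` supported on the fixed points of some `i ∈ F`, whereas `u i * k = k`. -/
theorem IsCstarSimple.exists_mem_orbit_forall_smul_ne (hG : IsCstarSimple G)
    {N : Set (ℓ^∞(G, ℝ) →L[ℝ] ℝ)} (hN : IsMinimalLeftIdeal N) {y : ℓ^∞(G, ℝ) →L[ℝ] ℝ}
    (hy : y ∈ N.extremePoints ℝ) {F : Finset G} (hF : 1 ∉ F) :
    ∃ z ∈ MulAction.orbit G y, ∀ g ∈ F, g • z ≠ z := by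
  by_contra! hcon
  let Ω := MulAction.orbit G y
  let ω₁ : Ω := ⟨y, MulAction.mem_orbit_self y⟩
  have : Nonempty Ω := ⟨ω₁⟩
  have : Nontrivial 𝓑(Ω) := nontrivial_clm_l2
  have hω₁ : IsAmenable (MulAction.stabilizer G ω₁) := by
    have hstab : MulAction.stabilizer G ω₁ = MulAction.stabilizer G y :=
      Subgroup.ext fun g => Subtype.ext_iff
    exact hstab ▸ (hN.prop.isMean y hy.1).isAmenable_stabilizer
  choose s hs using fun ω : Ω => MulAction.mem_orbit_iff.1 ω.2
  obtain ⟨i, hi, S, hcov, ω₀, hω₀⟩ := exists_irredundant_cover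
    (C := fun g => {ω : Ω | g • ω = ω})
    (fun ω => (hcon ω ω.2).imp fun _ h => ⟨h.1, Subtype.ext h.2⟩)
  obtain ⟨ψ, hψ, hψW, hψM, -⟩ := hN.exists_isRealState_multiplicative (permCovariantRep G Ω)
    (hs ω₀ ▸ hN.prop.smul_mem_extremePoints (s ω₀) hy) hy.1
    (fun g ω => (hs (g • ω)).trans (congrArg (g • ·) (hs ω).symm))
    (fun _ => hG.one_le_norm_one_sub hω₁) fun g _ => star_mul_mul_mem_spanNeOne _ g
  obtain ⟨k, r, hr, hψk, hk⟩ := exists_apply_mul_M_eq_mul _ hψM (S := S)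
    fun j hj h => hω₀ j hj (Subtype.ext h)
  have hki (ω : Ω) (hω : i • ω ≠ ω) : k ω = 0 := by
    obtain ⟨j, hj, hjω⟩ := hcov ω hω
    exact hk j hj ω (by rw [hs]; exact congrArg Subtype.val hjω)
  have hi₁ : i ≠ 1 := ne_of_mem_of_not_mem hi hF
  refine hr ?_
  calc r = ψ 1 * r := by rw [hψ.map_one, one_mul]
    _ = ψ (mulOp k) := by rw [← hψk, one_mul]; rfl
    _ = ψ ((permRep G Ω i : 𝓑(Ω)) * mulOp k) := by
        rw [permRep_mul_mulOp hki]
    _ = ψ (permRep G Ω i : 𝓑(Ω)) * r := hψk _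
    _ = 0 := by rw [hψW _ (coe_mem_spanNeOne _ hi₁), zero_mul]

theorem IsCstarSimple.not_isRecurrent (hG : IsCstarSimple G) {H : Subgroup G}
    (hH : IsAmenable H) : ¬IsRecurrent H := by
  rw [isRecurrent_iff]
  rintro ⟨F, hF₁, hF⟩
  obtain ⟨N, hN⟩ := exists_isMinimalLeftIdeal G
  obtain ⟨y, hy⟩ := hN.extremePoints_nonempty
  obtain ⟨_, ⟨g, rfl⟩, hg⟩ := hG.exists_mem_orbit_forall_smul_ne hN hy hF₁
  obtain ⟨s, hs, hfix⟩ :=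
    hN.exists_smul_eq (hN.prop.smul_mem_extremePoints g hy) hH hF
  exact hg s hs hfix

end Forward

/-- **Theorem (Kennedy).** A discrete group is C*-simple if and only if it has no subgroup
that is both amenable and recurrent. -/
theorem cstarSimple_iff_no_amenable_recurrent_subgroup (G : Type u) [Group G] :
    IsCstarSimple G ↔ ¬ ∃ H : Subgroup G, IsAmenable H ∧ IsRecurrent H := by
  refine ⟨fun hG ⟨H, hH, hrec⟩ => hG.not_isRecurrent hH hrec, fun h => ?_⟩
  exact isCstarSimple_of_forall_not_isRecurrent fun H hH hrec => h ⟨H, hH, hrec⟩
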